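/- arXiv:2311.18227 — 5 statements merged into one kernel-verified Lean document; each statement's English description precedes it below -/
import Mathlib

section
/- Let a_{n,k} = |S_{n,k}^{1≺n}(1324)|. For all k ≥ 1 and n ≥ k+1, a_{n,k} equals the sum, over all k-tuples (m₁,…,m_k) of integers with each mᵢ ≥ 2 and m₁ + ⋯ + m_k = n + k − 1, of the products a_{m₁,1} · a_{m₂,1} ⋯ a_{m_k,1}. (Equivalently, every permutation in S_{n,k}^{1≺n}(1324) decomposes uniquely as a product of k primitives.) -/
/-- A permutation of `{1,…,n}` (encoded as `Equiv.Perm (Fin n)` with 0-based values)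
avoids the pattern 1324 if there are no indices `i < j < k < l` with
`σ i < σ k < σ j < σ l`. -/
def Avoids1324 {n : ℕ} (σ : Equiv.Perm (Fin n)) : Prop :=
  ¬ ∃ i j k l : Fin n, i < j ∧ j < k ∧ k < l ∧ σ i < σ k ∧ σ k < σ j ∧ σ j < σ l

/-- The set `S_{n,k}^{a ≺ n}(1324)`: 1324-avoiding permutations with the entry `a`
exactly `k` places to the left of the entry `n`, and the entries `1, …, a-1` all to
the right of `n`.  (Values are 0-based: the entry `a` is `⟨a-1, _⟩`.) -/
def SPerm (n a k : ℕ) : Set (Equiv.Perm (Fin n)) :=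
  {σ | Avoids1324 σ ∧ ∃ hn : n - 1 < n, ∃ ha : a - 1 < n,
    ((σ.symm ⟨n - 1, hn⟩ : Fin n) : ℕ) = ((σ.symm ⟨a - 1, ha⟩ : Fin n) : ℕ) + k ∧
    ∀ b : Fin n, (b : ℕ) + 1 < a → σ.symm ⟨n - 1, hn⟩ < σ.symm b}

/-!
Write `a_{n,k}` for the number of permutations in `S_{n,k}^{1≺n}(1324)`, and let `b` be the entry
following `1` in such a permutation, where `k ≥ 2`. An entry `x < b` between `b` and `n` would
create the pattern `1 b x n`. An entry `x < b` followed by some `y > b` would create `x y b n` if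
both are to the left of `1`, and `1 b x y` if both are to the right of `n`. So the permutation is
determined by its entries `≤ b`, which form a primitive, and its entries `≥ b`, in which `b` and `n`
are `k - 1` places apart. Conversely, any two such words can be glued along `b`: a pattern 1324 in
the result using entries both smaller and larger than `b` lies in the part `… 1 b … n …` where
everything smaller than `b` precedes `b` and everything larger follows it, and can then be moved
into one of the two words. Hence `a_{n,k} = ∑ b, a_{b,1} a_{n-b+1,k-1}`, which for the generating
functions `F_k` of `a_{n,k}` in the variable `n` reads `X * F_k = F_1 * F_{k-1}`, so that
`X ^ (k - 1) * F_k = F_1 ^ k`.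
-/

open scoped List

section Lists

variable {α : Type*}

theorem cons_sublist_of_cons_sublist_append {a : α} {l l₁ l₂ : List α}
    (h : a :: l <+ l₁ ++ l₂) (ha : a ∉ l₁) : a :: l <+ l₂ := by
  obtain ⟨_ | ⟨b, m⟩, m', hm, hm₁, hm₂⟩ := List.sublist_append_iff.1 h
  · simpa [hm] using hm₂
  · obtain ⟨rfl, -⟩ := List.cons.inj hm
    exact absurd (hm₁.subset List.mem_cons_self) ha

theorem concat_sublist_of_concat_sublist_append {a : α} {l l₁ l₂ : List α}
    (h : l ++ [a] <+ l₁ ++ l₂) (ha : a ∉ l₂) : l ++ [a] <+ l₁ := by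
  have h_reverse : a :: l.reverse <+ l₂.reverse ++ l₁.reverse := by
    simpa using h.reverse
  simpa using (cons_sublist_of_cons_sublist_append h_reverse (by simpa using ha)).reverse

theorem sublist_filter_of_forall {l₁ l₂ : List α} {p : α → Bool} (h : l₁ <+ l₂)
    (hp : ∀ x ∈ l₁, p x) : l₁ <+ l₂.filter p :=
  List.filter_eq_self.2 hp ▸ h.filter p

theorem filter_append_of_left {p : α → Bool} {l₁ l₂ : List α} (h₁ : ∀ x ∈ l₁, p x)
    (h₂ : ∀ x ∈ l₂, ¬p x) : (l₁ ++ l₂).filter p = l₁ := by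
  rw [List.filter_append, List.filter_eq_self.2 h₁, List.filter_eq_nil_iff.2 h₂, List.append_nil]

theorem filter_append_of_right {p : α → Bool} {l₁ l₂ : List α} (h₁ : ∀ x ∈ l₁, ¬p x)
    (h₂ : ∀ x ∈ l₂, p x) : (l₁ ++ l₂).filter p = l₂ := by
  rw [List.filter_append, List.filter_eq_nil_iff.2 h₁, List.filter_eq_self.2 h₂, List.nil_append]

theorem filter_append_filter_not_of_pairwise {p : α → Bool} {l : List α}
    (h : l.Pairwise fun x y => p y → p x) : l.filter p ++ l.filter (fun x => !p x) = l := by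
  induction l with
  | nil => rfl
  | cons a l ih =>
    obtain ⟨ha, hl⟩ := List.pairwise_cons.1 h
    by_cases hpa : p a
    · simp [hpa, ih hl]
    · have hnot : ∀ x ∈ l, ¬p x := fun x hx hpx => hpa (ha x hx hpx)
      have hfilter : l.filter p = [] := List.filter_eq_nil_iff.2 hnot
      have hfilter_not : l.filter (fun x => !p x) = l := by simpa using hnot
      simp [hpa, hfilter, hfilter_not]

theorem exists_eq_append_cons_append_cons_iff {x y : α} {k : ℕ} {l : List α} :
    (∃ l₁ l₂ l₃, l₂.length = k ∧ l₁ ++ x :: (l₂ ++ y :: l₃) = l) ↔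
      ∃ i, l[i]? = some x ∧ l[i + (k + 1)]? = some y := by
  constructor
  · rintro ⟨l₁, l₂, l₃, rfl, rfl⟩
    exact ⟨l₁.length, by simp, by simp⟩
  · rintro ⟨i, hx, hy⟩
    obtain ⟨hi, rfl⟩ := List.getElem?_eq_some_iff.1 hx
    obtain ⟨hj, rfl⟩ := List.getElem?_eq_some_iff.1 hy
    refine ⟨l.take i, (l.drop (i + 1)).take k, l.drop (i + (k + 1) + 1), by simp; omega, ?_⟩
    have hdrop : l.drop (i + (k + 1)) = (l.drop (i + 1)).drop k := by
      rw [List.drop_drop, Nat.add_right_comm, Nat.add_assoc]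
    rw [← List.drop_eq_getElem_cons, hdrop, List.take_append_drop, ← List.drop_eq_getElem_cons,
      List.take_append_drop]

theorem sublist_finRange_iff {n : ℕ} {l : List (Fin n)} :
    l <+ List.finRange n ↔ l.Pairwise (· < ·) := by
  refine ⟨fun h => (List.pairwise_lt_finRange n).sublist h, fun h => ?_⟩
  refine List.sublist_of_subperm_of_pairwise ?_ h (List.pairwise_lt_finRange n)
  exact List.subperm_of_subset h.nodup fun x _ => List.mem_finRange x

theorem exists_perm_ofFn_comp_eq_iff {n : ℕ} {f : Fin n → α} (hf : f.Injective) {l : List α} :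
    (∃ σ : Equiv.Perm (Fin n), List.ofFn (f ∘ σ) = l) ↔
      l.Nodup ∧ ∀ x, x ∈ l ↔ x ∈ Set.range f := by
  constructor
  · rintro ⟨σ, rfl⟩
    refine ⟨List.nodup_ofFn.2 (hf.comp σ.injective), fun x => ?_⟩
    rw [List.mem_ofFn', σ.surjective.range_comp]
  · rintro ⟨hnodup, hmem⟩
    have hlength : l.length = n := by
      have hperm : l.Perm (List.ofFn f) :=
        (List.perm_ext_iff_of_nodup hnodup (List.nodup_ofFn.2 hf)).2 (by simpa using hmem)
      simpa using hperm.length_eq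
    subst hlength
    choose g hg using fun i : Fin l.length => (hmem (l.get i)).1 (l.get_mem i)
    have hg_injective : g.Injective := fun i j hij =>
      List.nodup_iff_injective_get.1 hnodup (by rw [← hg, ← hg, hij])
    refine ⟨Equiv.ofBijective g (Finite.injective_iff_bijective.1 hg_injective), ?_⟩
    exact (congrArg List.ofFn (funext hg)).trans (List.ofFn_get l)

end Lists

/-- `WordAvoids1324 l` is pattern avoidance for words: no subsequence of `l` is order-isomorphic
to 1324. -/
def WordAvoids1324 {α : Type*} [LT α] (l : List α) : Prop :=
  ∀ ⦃w x y z : α⦄, [w, x, y, z] <+ l → w < y → y < x → ¬x < z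

namespace WordAvoids1324

variable {α : Type*}

theorem sublist [LT α] {l₁ l₂ : List α} (h : WordAvoids1324 l₂) (hl : l₁ <+ l₂) :
    WordAvoids1324 l₁ :=
  fun _ _ _ _ hwxyz => h (hwxyz.trans hl)

-- In a pattern `w x y z` either `x < b`, and then `b` can replace `z`, or `b < y`, and then `b` can
-- replace `w`.
theorem append_cons_of_lt [LinearOrder α] {b : α} {Q R : List α} (hQ : ∀ x ∈ Q, x < b)
    (hR : ∀ x ∈ R, b < x) (hle : WordAvoids1324 (Q ++ [b])) (hge : WordAvoids1324 (b :: R)) :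
    WordAvoids1324 (Q ++ b :: R) := by
  intro w x y z hwxyz hwy hyx hxz
  have hpairwise : (Q ++ b :: R).Pairwise fun u v => u < b ∨ b < v := by
    refine List.pairwise_append.2 ⟨?_, List.pairwise_cons.2 ⟨?_, ?_⟩, ?_⟩
    · exact List.pairwise_of_forall_mem_list fun u hu _ _ => .inl (hQ u hu)
    · exact fun v hv => .inr (hR v hv)
    · exact List.pairwise_of_forall_mem_list fun _ _ v hv => .inr (hR v hv)
    · exact fun u hu _ _ => .inl (hQ u hu)
  have hxy : [x, y] <+ Q ++ b :: R := .trans (by simp) hwxyz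
  have hfilter_lt : (Q ++ b :: R).filter (· < b) = Q :=
    filter_append_of_left (by simpa using hQ) (by simpa using fun x hx => (hR x hx).le)
  have hfilter_gt : (Q ++ b :: R).filter (b < ·) = R :=
    List.append_cons Q b R ▸ filter_append_of_right
      (by simpa [or_imp, forall_and] using fun x hx => (hQ x hx).le) (by simpa using hR)
  rcases List.pairwise_iff_forall_sublist.1 hpairwise hxy with hxb | hby
  · have hwxy : [w, x, y] <+ (Q ++ b :: R).filter (· < b) :=
      sublist_filter_of_forall (.trans (by simp) hwxyz)
        (by simp [hxb, hyx.trans hxb, (hwy.trans hyx).trans hxb])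
    rw [hfilter_lt] at hwxy
    exact hle (hwxy.append (.refl [b])) hwy hyx hxb
  · have hxyz : [x, y, z] <+ (Q ++ b :: R).filter (b < ·) :=
      sublist_filter_of_forall (.trans (by simp) hwxyz)
        (by simp [hby, hby.trans hyx, (hby.trans hyx).trans hxz])
    rw [hfilter_gt] at hxyz
    exact hge (hxyz.cons_cons b) hby hyx hxz

end WordAvoids1324

theorem wordAvoids1324_ofFn_comp_iff {α : Type*} [Preorder α] {n : ℕ} (e : Fin n ↪o α)
    (σ : Equiv.Perm (Fin n)) : WordAvoids1324 (List.ofFn (e ∘ σ)) ↔ Avoids1324 σ := by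
  rw [List.ofFn_eq_map]
  constructor
  · rintro h ⟨i, j, k, l, hij, hjk, hkl, hik, hkj, hjl⟩
    have hsublist : [i, j, k, l] <+ List.finRange n := sublist_finRange_iff.2 (by grind)
    exact h (hsublist.map (e ∘ σ)) (e.lt_iff_lt.2 hik) (e.lt_iff_lt.2 hkj) (e.lt_iff_lt.2 hjl)
  · intro h w x y z hwxyz hwy hyx hxz
    obtain ⟨indices, hindices, hmap⟩ := List.sublist_map_iff.1 hwxyz
    obtain ⟨i, j, k, l, rfl⟩ :=
      List.length_eq_four.1 (by simpa using congrArg List.length hmap.symm)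
    obtain ⟨rfl, rfl, rfl, rfl⟩ : w = e (σ i) ∧ x = e (σ j) ∧ y = e (σ k) ∧ z = e (σ l) := by
      simpa using hmap
    obtain ⟨⟨hij, -, -⟩, ⟨hjk, -⟩, hkl⟩ : (i < j ∧ i < k ∧ i < l) ∧ (j < k ∧ j < l) ∧ k < l := by
      simpa using sublist_finRange_iff.1 hindices
    exact h ⟨i, j, k, l, hij, hjk, hkl, e.lt_iff_lt.1 hwy, e.lt_iff_lt.1 hyx, e.lt_iff_lt.1 hxz⟩

section Gluing

variable {α : Type*} [LinearOrder α] {b : α} {P Q R S : List α}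

theorem filter_le_append_append_cons_append (hP : ∀ x ∈ P, b < x) (hQ : ∀ x ∈ Q, x < b)
    (hR : ∀ x ∈ R, b < x) (hS : ∀ x ∈ S, x < b) :
    (P ++ (Q ++ b :: R) ++ S).filter (· ≤ b) = Q ++ b :: S := by
  have hP' : P.filter (· ≤ b) = [] := by simpa using hP
  have hQ' : Q.filter (· ≤ b) = Q := by simpa using fun x hx => (hQ x hx).le
  have hR' : R.filter (· ≤ b) = [] := by simpa using hR
  have hS' : S.filter (· ≤ b) = S := by simpa using fun x hx => (hS x hx).le
  simp [hP', hQ', hR', hS']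

theorem filter_ge_append_append_cons_append (hP : ∀ x ∈ P, b < x) (hQ : ∀ x ∈ Q, x < b)
    (hR : ∀ x ∈ R, b < x) (hS : ∀ x ∈ S, x < b) :
    (P ++ (Q ++ b :: R) ++ S).filter (b ≤ ·) = P ++ b :: R := by
  have hP' : P.filter (b ≤ ·) = P := by simpa using fun x hx => (hP x hx).le
  have hQ' : Q.filter (b ≤ ·) = [] := by simpa using hQ
  have hR' : R.filter (b ≤ ·) = R := by simpa using fun x hx => (hR x hx).le
  have hS' : S.filter (b ≤ ·) = [] := by simpa using hS
  simp [hP', hQ', hR', hS']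

theorem nodup_append_append_cons_append (hP : ∀ x ∈ P, b < x) (hQ : ∀ x ∈ Q, x < b)
    (hR : ∀ x ∈ R, b < x) (hS : ∀ x ∈ S, x < b) (hle : (Q ++ b :: S).Nodup)
    (hge : (P ++ b :: R).Nodup) : (P ++ (Q ++ b :: R) ++ S).Nodup := by
  simp only [List.nodup_append, List.nodup_cons, List.mem_append, List.mem_cons] at hle hge ⊢
  grind

theorem WordAvoids1324.append_append_cons_append (hP : ∀ x ∈ P, b < x) (hQ : ∀ x ∈ Q, x < b)
    (hR : ∀ x ∈ R, b < x) (hS : ∀ x ∈ S, x < b) (hle : WordAvoids1324 (Q ++ b :: S))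
    (hge : WordAvoids1324 (P ++ b :: R)) : WordAvoids1324 (P ++ (Q ++ b :: R) ++ S) := by
  intro w x y z hwxyz hwy hyx hxz
  rcases le_or_gt z b with hzb | hbz
  · have hfilter := sublist_filter_of_forall (p := (· ≤ b)) hwxyz (by grind)
    rw [filter_le_append_append_cons_append hP hQ hR hS] at hfilter
    exact hle hfilter hwy hyx hxz
  rcases le_or_gt b w with hbw | hwb
  · have hfilter := sublist_filter_of_forall (p := (b ≤ ·)) hwxyz (by grind)
    rw [filter_ge_append_append_cons_append hP hQ hR hS] at hfilter
    exact hge hfilter hwy hyx hxz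
  have hdrop_S : [w, x, y, z] <+ P ++ (Q ++ b :: R) :=
    concat_sublist_of_concat_sublist_append (l := [w, x, y]) hwxyz fun hz => (hS z hz).not_gt hbz
  have hdrop_P : [w, x, y, z] <+ Q ++ b :: R :=
    cons_sublist_of_cons_sublist_append hdrop_S fun hw => (hP w hw).not_gt hwb
  exact append_cons_of_lt hQ hR (hle.sublist (by simp)) (hge.sublist (by simp)) hdrop_P hwy hyx hxz

end Gluing

/-- A word with two marked letters, cut at these letters: `left` stands before the first one,
`middle` between the two and `right` after the second one. The marked letters themselves are
supplied separately, since cutting and gluing words changes them. -/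
@[ext]
structure MarkedWord (α : Type*) where
  left : List α
  middle : List α
  right : List α

namespace MarkedWord

variable {α : Type*}

/-- The word underlying a marked word whose marked letters are `lo` and `hi`. -/
def toList (lo hi : α) (w : MarkedWord α) : List α :=
  w.left ++ lo :: (w.middle ++ hi :: w.right)

theorem nodup_toList_iff {lo hi : α} {w : MarkedWord α} :
    (w.toList lo hi).Nodup ↔ (lo :: hi :: (w.left ++ w.middle ++ w.right)).Nodup := by
  rw [toList, List.nodup_middle, ← List.append_assoc, List.nodup_cons, List.nodup_middle,
    List.nodup_cons (l := hi :: _), List.perm_middle.mem_iff]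

theorem injOn_toList (lo hi : α) :
    Set.InjOn (toList lo hi) {w | (w.toList lo hi).Nodup} := by
  rintro ⟨A, B, C⟩ hnodup ⟨A', B', C'⟩ hnodup' heq
  simp only [Set.mem_ofPred_eq, nodup_toList_iff, List.nodup_cons, List.mem_cons,
    List.mem_append] at hnodup hnodup'
  obtain ⟨rfl, -, hrest⟩ := (List.append_cons_inj_of_notMem (by tauto) (by grind)).1 heq
  obtain ⟨rfl, -, rfl⟩ := (List.append_cons_inj_of_notMem (by tauto) (by tauto)).1 hrest
  rfl

/-- The product of a primitive `s` and a marked word `t` along their common marked letter `b`,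
the last one of `s` and the first one of `t`. -/
def glue (b : α) (s t : MarkedWord α) : MarkedWord α :=
  ⟨t.left ++ s.left, b :: t.middle, t.right ++ s.right⟩

theorem toList_glue {lo b hi : α} {s t : MarkedWord α} : (glue b s t).toList lo hi =
    t.left ++ ((s.left ++ [lo]) ++ b :: (t.middle ++ hi :: t.right)) ++ s.right := by
  simp [glue, toList]

variable [LinearOrder α] {lo b hi : α} {k : ℕ} {w s t : MarkedWord α}

/-- `w.IsAvoider lo hi k` says that the word of `w` lists the interval `[lo, hi]` once, avoids 1324
and has `hi` exactly `k + 1` places to the right of `lo`. These are the words of the elements of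
`S_{n,k+1}^{1≺n}(1324)` with the values `1, …, n` renamed to the elements of `[lo, hi]`;
primitives are the case `k = 0`. -/
structure IsAvoider (lo hi : α) (k : ℕ) (w : MarkedWord α) : Prop where
  length_middle : w.middle.length = k
  nodup : (w.toList lo hi).Nodup
  mem_toList : ∀ x, x ∈ w.toList lo hi ↔ x ∈ Set.Icc lo hi
  avoids : WordAvoids1324 (w.toList lo hi)

namespace IsAvoider

theorem lt (hw : w.IsAvoider lo hi k) : lo < hi := by
  have hlo := (hw.mem_toList lo).1 (by simp [toList])
  have hne : lo ≠ hi := List.ne_of_not_mem_cons (List.nodup_cons.1 (nodup_toList_iff.1 hw.nodup)).1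
  exact lt_of_le_of_ne hlo.2 hne

theorem mem_Ioo (hw : w.IsAvoider lo hi k) {x : α} (hx : x ∈ w.left ++ w.middle ++ w.right) :
    x ∈ Set.Ioo lo hi := by
  obtain ⟨hlo, hhi⟩ := (hw.mem_toList x).1 (by simp only [toList]; grind)
  have hnodup := nodup_toList_iff.1 hw.nodup
  simp only [List.nodup_cons, List.mem_cons] at hnodup
  exact ⟨lt_of_le_of_ne hlo (by grind), lt_of_le_of_ne hhi (by grind)⟩

theorem pairwise_left (hw : w.IsAvoider lo hi k) (hb : b ∈ w.middle) :
    w.left.Pairwise fun x y => b < y → b < x := by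
  refine List.pairwise_iff_forall_sublist.2 fun {x y} hxy hby => ?_
  have hx : x ∈ w.left := hxy.subset (by simp)
  have hyhi : y < hi := (hw.mem_Ioo (by simp [hxy.subset (List.mem_cons_of_mem x _)])).2
  have hne : x ≠ b := by
    have hnodup := nodup_toList_iff.1 hw.nodup
    grind
  by_contra hxb
  have hsublist : [x, y] ++ lo :: ([b] ++ hi :: []) <+ w.toList lo hi :=
    hxy.append (((List.singleton_sublist.2 hb).append
      ((List.nil_sublist w.right).cons_cons hi)).cons_cons lo)
  exact hw.avoids (.trans (by simp) hsublist) (lt_of_le_of_ne (not_lt.1 hxb) hne) hby hyhi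

theorem pairwise_right (hw : w.IsAvoider lo hi k) (hb : b ∈ w.middle) :
    w.right.Pairwise fun x y => b < y → b < x := by
  refine List.pairwise_iff_forall_sublist.2 fun {x y} hxy hby => ?_
  have hx : x ∈ w.right := hxy.subset (by simp)
  have hlox : lo < x := (hw.mem_Ioo (by simp [hx])).1
  have hne : x ≠ b := by
    have hnodup := nodup_toList_iff.1 hw.nodup
    grind
  by_contra hxb
  have hsublist : [] ++ lo :: ([b] ++ hi :: [x, y]) <+ w.toList lo hi :=
    (List.nil_sublist w.left).append (((List.singleton_sublist.2 hb).append
      (hxy.cons_cons hi)).cons_cons lo)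
  exact hw.avoids (.trans (by simp) hsublist) hlox (lt_of_le_of_ne (not_lt.1 hxb) hne) hby

theorem lt_of_middle_eq_cons {B : List α} (hw : w.IsAvoider lo hi k) (hmiddle : w.middle = b :: B)
    {x : α} (hx : x ∈ B) : b < x := by
  obtain ⟨hlox, -⟩ : x ∈ Set.Ioo lo hi := hw.mem_Ioo (by simp [hmiddle, hx])
  obtain ⟨-, hbhi⟩ : b ∈ Set.Ioo lo hi := hw.mem_Ioo (by simp [hmiddle])
  have hne : x ≠ b := by
    have hnodup := nodup_toList_iff.1 hw.nodup
    grind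
  by_contra hbx
  have hsublist : [] ++ lo :: (b :: [x] ++ hi :: []) <+ w.toList lo hi := by
    rw [toList, hmiddle]
    exact (List.nil_sublist w.left).append ((((List.singleton_sublist.2 hx).cons_cons b).append
      ((List.nil_sublist w.right).cons_cons hi)).cons_cons lo)
  exact hw.avoids hsublist hlox (lt_of_le_of_ne (not_lt.1 hbx) hne) hbhi

end IsAvoider

/-- Conditions under which `s`, with marked letters `lo` and `b`, can be glued below `t`, with
marked letters `b` and `hi`: the letters of the two words lie on different sides of `b`, and the
marked letters of `s` are adjacent. -/
structure IsGluable (lo b hi : α) (s t : MarkedWord α) : Prop where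
  middle_eq_nil : s.middle = []
  left_append_lt : ∀ x ∈ s.left ++ [lo], x < b
  right_lt : ∀ x ∈ s.right, x < b
  lt_left : ∀ x ∈ t.left, b < x
  lt_middle_append : ∀ x ∈ t.middle ++ hi :: t.right, b < x

/-- The primitive factor of `w` when `b` is the first letter of `w.middle`. -/
def lower (b : α) (w : MarkedWord α) : MarkedWord α :=
  ⟨w.left.filter (· ≤ b), [], w.right.filter (· ≤ b)⟩

/-- The factor of `w` complementary to `w.lower b`. -/
def upper (b : α) (w : MarkedWord α) : MarkedWord α :=
  ⟨w.left.filter (b < ·), w.middle.tail, w.right.filter (b < ·)⟩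

theorem IsAvoider.isGluable (hs : s.IsAvoider lo b 0) (ht : t.IsAvoider b hi k) :
    IsGluable lo b hi s t where
  middle_eq_nil := List.length_eq_zero_iff.1 hs.length_middle
  left_append_lt x hx := by
    rcases List.mem_append.1 hx with hx | hx
    · exact (hs.mem_Ioo (by simp [hx])).2
    · exact List.mem_singleton.1 hx ▸ hs.lt
  right_lt x hx := (hs.mem_Ioo (by simp [hx])).2
  lt_left x hx := (ht.mem_Ioo (by simp [hx])).1
  lt_middle_append x hx := by
    rcases List.mem_append.1 hx with hx | hx
    · exact (ht.mem_Ioo (by simp [hx])).1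
    rcases List.mem_cons.1 hx with rfl | hx
    · exact ht.lt
    · exact (ht.mem_Ioo (by simp [hx])).1

namespace IsGluable

theorem filter_le_toList_glue (h : IsGluable lo b hi s t) :
    ((glue b s t).toList lo hi).filter (· ≤ b) = s.toList lo b := by
  rw [toList_glue, filter_le_append_append_cons_append h.lt_left h.left_append_lt
    h.lt_middle_append h.right_lt]
  simp [toList, h.middle_eq_nil]

theorem filter_ge_toList_glue (h : IsGluable lo b hi s t) :
    ((glue b s t).toList lo hi).filter (b ≤ ·) = t.toList b hi := by
  rw [toList_glue, filter_ge_append_append_cons_append h.lt_left h.left_append_lt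
    h.lt_middle_append h.right_lt]
  rfl

theorem isAvoider_glue_iff (h : IsGluable lo b hi s t) :
    (glue b s t).IsAvoider lo hi (k + 1) ↔ s.IsAvoider lo b 0 ∧ t.IsAvoider b hi k := by
  have hlob : lo < b := h.left_append_lt lo (by simp)
  have hbhi : b < hi := h.lt_middle_append hi (by simp)
  constructor
  · intro hw
    refine ⟨⟨by simp [h.middle_eq_nil], ?_, fun x => ?_, ?_⟩,
      ⟨by simpa [glue] using hw.length_middle, ?_, fun x => ?_, ?_⟩⟩
    · exact h.filter_le_toList_glue ▸ hw.nodup.filter _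
    · rw [← h.filter_le_toList_glue, List.mem_filter, hw.mem_toList]
      simp only [Set.mem_Icc, decide_eq_true_eq]
      grind
    · exact h.filter_le_toList_glue ▸ hw.avoids.sublist List.filter_sublist
    · exact h.filter_ge_toList_glue ▸ hw.nodup.filter _
    · rw [← h.filter_ge_toList_glue, List.mem_filter, hw.mem_toList]
      simp only [Set.mem_Icc, decide_eq_true_eq]
      grind
    · exact h.filter_ge_toList_glue ▸ hw.avoids.sublist List.filter_sublist
  · rintro ⟨hs, ht⟩
    have hs_toList : s.toList lo b = s.left ++ [lo] ++ b :: s.right := by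
      simp [toList, h.middle_eq_nil]
    refine ⟨by simp [glue, ht.length_middle], ?_, fun x => ?_, ?_⟩
    · rw [toList_glue]
      exact nodup_append_append_cons_append h.lt_left h.left_append_lt h.lt_middle_append h.right_lt
        (hs_toList ▸ hs.nodup) ht.nodup
    · rw [← Set.Icc_union_Icc_eq_Icc hlob.le hbhi.le, Set.mem_union, ← hs.mem_toList,
        ← ht.mem_toList, toList_glue, hs_toList, toList]
      simp only [List.mem_append, List.mem_cons]
      tauto
    · rw [toList_glue]
      exact .append_append_cons_append h.lt_left h.left_append_lt h.lt_middle_append h.right_lt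
        (hs_toList ▸ hs.avoids) ht.avoids

theorem lower_glue (h : IsGluable lo b hi s t) : lower b (glue b s t) = s := by
  have hleft : (t.left ++ s.left).filter (· ≤ b) = s.left :=
    filter_append_of_right (by simpa using h.lt_left)
      (by simpa using fun x hx => (h.left_append_lt x (by simp [hx])).le)
  have hright : (t.right ++ s.right).filter (· ≤ b) = s.right :=
    filter_append_of_right (by simpa using fun x hx => h.lt_middle_append x (by simp [hx]))
      (by simpa using fun x hx => (h.right_lt x hx).le)
  exact MarkedWord.ext hleft h.middle_eq_nil.symm hright

theorem upper_glue (h : IsGluable lo b hi s t) : upper b (glue b s t) = t := by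
  have hleft : (t.left ++ s.left).filter (b < ·) = t.left :=
    filter_append_of_left (by simpa using h.lt_left)
      (by simpa using fun x hx => (h.left_append_lt x (by simp [hx])).le)
  have hright : (t.right ++ s.right).filter (b < ·) = t.right :=
    filter_append_of_left (by simpa using fun x hx => h.lt_middle_append x (by simp [hx]))
      (by simpa using fun x hx => (h.right_lt x hx).le)
  exact MarkedWord.ext hleft rfl hright

end IsGluable

namespace IsAvoider

variable {B : List α}

theorem glue_lower_upper (hw : w.IsAvoider lo hi k) (hmiddle : w.middle = b :: B) :
    glue b (lower b w) (upper b w) = w := by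
  have hb : b ∈ w.middle := by simp [hmiddle]
  have hleft := filter_append_filter_not_of_pairwise (p := (b < ·))
    (by simpa using hw.pairwise_left hb)
  have hright := filter_append_filter_not_of_pairwise (p := (b < ·))
    (by simpa using hw.pairwise_right hb)
  simp only [← decide_not, not_lt] at hleft hright
  exact MarkedWord.ext hleft (by simp [glue, upper, hmiddle]) hright

theorem isGluable_lower_upper (hw : w.IsAvoider lo hi k) (hmiddle : w.middle = b :: B) :
    IsGluable lo b hi (lower b w) (upper b w) := by
  obtain ⟨hlob, hbhi⟩ : b ∈ Set.Ioo lo hi := hw.mem_Ioo (by simp [hmiddle])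
  have hne : ∀ x ∈ w.left ++ w.right, x ≠ b := by
    have hnodup := nodup_toList_iff.1 hw.nodup
    grind
  have hlt : ∀ x ∈ w.left ++ w.right, x ≤ b → x < b := fun x hx hxb =>
    lt_of_le_of_ne hxb (hne x hx)
  refine ⟨rfl, fun x hx => ?_, fun x hx => ?_, ?_, ?_⟩
  · rcases List.mem_append.1 hx with hx | hx
    · obtain ⟨hx, hxb⟩ := List.mem_filter.1 hx
      exact hlt x (List.mem_append_left _ hx) (of_decide_eq_true hxb)
    · exact List.mem_singleton.1 hx ▸ hlob
  · obtain ⟨hx, hxb⟩ := List.mem_filter.1 hx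
    exact hlt x (List.mem_append_right _ hx) (of_decide_eq_true hxb)
  · simp [upper]
  · have hB : ∀ x ∈ B, b < x := fun x => hw.lt_of_middle_eq_cons hmiddle
    simp only [upper, hmiddle, List.tail_cons]
    grind

theorem lower_upper (hw : w.IsAvoider lo hi (k + 1)) (hmiddle : w.middle = b :: B) :
    (lower b w).IsAvoider lo b 0 ∧ (upper b w).IsAvoider b hi k :=
  (hw.isGluable_lower_upper hmiddle).isAvoider_glue_iff.1
    ((hw.glue_lower_upper hmiddle).symm ▸ hw)

theorem glue (hs : s.IsAvoider lo b 0) (ht : t.IsAvoider b hi k) :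
    (glue b s t).IsAvoider lo hi (k + 1) :=
  (hs.isGluable ht).isAvoider_glue_iff.2 ⟨hs, ht⟩

end IsAvoider

theorem finite_setOf_isAvoider [LocallyFiniteOrder α] (lo hi : α) (k : ℕ) :
    {w : MarkedWord α | w.IsAvoider lo hi k}.Finite := by
  refine Set.Finite.of_injOn (f := toList lo hi)
    (t := {l | l ∈ (Finset.Icc lo hi).toList.permutations}) (fun w hw => ?_)
    ((injOn_toList lo hi).mono fun w hw => hw.nodup) (List.finite_toSet _)
  refine List.mem_permutations.2 ((List.perm_ext_iff_of_nodup hw.nodup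
    (Finset.nodup_toList _)).2 ?_)
  simpa using hw.mem_toList

/-- The words satisfying `MarkedWord.IsAvoider`, as a finset: the set `S_{n,k+1}^{1≺n}(1324)` in
word form. -/
noncomputable def avoiders [LocallyFiniteOrder α] (lo hi : α) (k : ℕ) : Finset (MarkedWord α) :=
  (finite_setOf_isAvoider lo hi k).toFinset

theorem mem_avoiders [LocallyFiniteOrder α] : w ∈ avoiders lo hi k ↔ w.IsAvoider lo hi k :=
  Set.Finite.mem_toFinset _

theorem card_avoiders_succ [LocallyFiniteOrder α] (lo hi : α) (k : ℕ) :
    (avoiders lo hi (k + 1)).card =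
      ∑ b ∈ Finset.Icc lo hi, (avoiders lo b 0).card * (avoiders b hi k).card := by
  simp_rw [← Finset.card_product]
  rw [← Finset.card_sigma]
  symm
  refine Finset.card_nbij (fun p => glue p.1 p.2.1 p.2.2) ?_ ?_ ?_
  · rintro ⟨b, s, t⟩ hst
    simp only [Finset.mem_coe, Finset.mem_sigma, Finset.mem_product, mem_avoiders] at hst ⊢
    exact hst.2.1.glue hst.2.2
  · rintro ⟨b, s, t⟩ hst ⟨b', s', t'⟩ hst' heq
    simp only [Finset.mem_coe, Finset.mem_sigma, Finset.mem_product, mem_avoiders] at hst hst'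
    obtain rfl : b = b' := (List.cons.inj (congrArg middle heq)).1
    have h := hst.2.1.isGluable hst.2.2
    have h' := hst'.2.1.isGluable hst'.2.2
    obtain rfl : s = s' := by simpa only [h.lower_glue, h'.lower_glue] using congrArg (lower b) heq
    obtain rfl : t = t' := by simpa only [h.upper_glue, h'.upper_glue] using congrArg (upper b) heq
    rfl
  · intro w hw
    replace hw := mem_avoiders.1 hw
    obtain ⟨b, B, hmiddle⟩ := List.exists_cons_of_length_eq_add_one hw.length_middle
    have hb : b ∈ Set.Ioo lo hi := hw.mem_Ioo (by simp [hmiddle])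
    refine ⟨⟨b, lower b w, upper b w⟩, ?_, hw.glue_lower_upper hmiddle⟩
    simpa only [Finset.mem_coe, Finset.mem_sigma, Finset.mem_product, Finset.mem_Icc, mem_avoiders]
      using ⟨⟨hb.1.le, hb.2.le⟩, hw.lower_upper hmiddle⟩

end MarkedWord

theorem mem_SPerm_one_iff {n k : ℕ} (hn : 0 < n) {σ : Equiv.Perm (Fin n)} :
    σ ∈ SPerm n 1 k ↔ Avoids1324 σ ∧
      (σ.symm ⟨n - 1, Nat.sub_lt hn one_pos⟩ : ℕ) = σ.symm ⟨0, hn⟩ + k := by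
  simp [SPerm, hn]

theorem getElem?_ofFn_comp_eq_some_iff {α : Type*} {n : ℕ} {f : Fin n → α} (hf : f.Injective)
    (σ : Equiv.Perm (Fin n)) (i : ℕ) (a : Fin n) :
    (List.ofFn (f ∘ σ))[i]? = some (f a) ↔ (σ.symm a : ℕ) = i := by
  rw [List.getElem?_ofFn, Option.dite_none_right_eq_some]
  constructor
  · rintro ⟨hi, h⟩
    obtain rfl : σ ⟨i, hi⟩ = a := hf (Option.some.inj h)
    simp
  · rintro rfl
    simp

section OneLine

variable {α : Type*} [LinearOrder α] [LocallyFiniteOrder α] {lo hi : α} {k : ℕ}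

/-- The one-line notation of `σ`, with the values `0, 1, …` renamed increasingly to the elements of
the interval `[lo, hi]`. -/
noncomputable def oneLine (lo hi : α) (σ : Equiv.Perm (Fin (Finset.Icc lo hi).card)) : List α :=
  List.ofFn ((Finset.Icc lo hi).orderEmbOfFin rfl ∘ σ)

theorem oneLine_injective (lo hi : α) : (oneLine lo hi).Injective := fun _ _ hστ =>
  DFunLike.coe_injective
    (((Finset.Icc lo hi).orderEmbOfFin rfl).injective.comp_left (List.ofFn_injective hστ))

theorem exists_oneLine_eq_iff {l : List α} :
    (∃ σ, oneLine lo hi σ = l) ↔ l.Nodup ∧ ∀ x, x ∈ l ↔ x ∈ Set.Icc lo hi := by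
  rw [← Finset.coe_Icc, ← Finset.range_orderEmbOfFin _ rfl]
  exact exists_perm_ofFn_comp_eq_iff (RelEmbedding.injective _)

theorem mem_SPerm_card_Icc_iff (h : lo ≤ hi) {σ : Equiv.Perm (Fin (Finset.Icc lo hi).card)} :
    σ ∈ SPerm _ 1 k ↔ (∃ i, (oneLine lo hi σ)[i]? = some lo ∧ (oneLine lo hi σ)[i + k]? = some hi) ∧
      WordAvoids1324 (oneLine lo hi σ) := by
  set e := (Finset.Icc lo hi).orderEmbOfFin rfl
  have hcard : 0 < (Finset.Icc lo hi).card := Finset.card_pos.2 (Finset.nonempty_Icc.2 h)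
  have hlo : e ⟨0, hcard⟩ = lo := (Finset.orderEmbOfFin_zero rfl hcard).trans <|
    (Finset.min'_eq_iff _ _ _).2 (by simp +contextual [h])
  have hhi : e ⟨_, Nat.sub_lt hcard one_pos⟩ = hi := (Finset.orderEmbOfFin_last rfl hcard).trans <|
    (Finset.max'_eq_iff _ _ _).2 (by simp +contextual [h])
  have hposition_lo (i : ℕ) := getElem?_ofFn_comp_eq_some_iff e.injective σ i ⟨0, hcard⟩
  have hposition_hi (i : ℕ) :=
    getElem?_ofFn_comp_eq_some_iff e.injective σ i ⟨_, Nat.sub_lt hcard one_pos⟩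
  rw [hlo] at hposition_lo
  rw [hhi] at hposition_hi
  rw [mem_SPerm_one_iff hcard, ← wordAvoids1324_ofFn_comp_iff e, and_comm]
  simp only [oneLine, e, hposition_lo, hposition_hi, exists_eq_left']

end OneLine

namespace MarkedWord

variable {α : Type*} [LinearOrder α] {lo hi : α} {k : ℕ}

theorem mem_image_toList_iff {l : List α} : l ∈ toList lo hi '' {w | w.IsAvoider lo hi k} ↔
    ((∃ i, l[i]? = some lo ∧ l[i + (k + 1)]? = some hi) ∧ WordAvoids1324 l) ∧
      (l.Nodup ∧ ∀ x, x ∈ l ↔ x ∈ Set.Icc lo hi) := by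
  rw [← exists_eq_append_cons_append_cons_iff]
  constructor
  · rintro ⟨w, hw, rfl⟩
    exact ⟨⟨⟨w.left, w.middle, w.right, hw.length_middle, rfl⟩, hw.avoids⟩, hw.nodup, hw.mem_toList⟩
  · rintro ⟨⟨⟨A, B, C, hB, rfl⟩, havoids⟩, hnodup, hmem⟩
    exact ⟨⟨A, B, C⟩, ⟨hB, hnodup, hmem, havoids⟩, rfl⟩

variable [LocallyFiniteOrder α]

theorem image_toList (h : lo ≤ hi) (k : ℕ) : toList lo hi '' {w | w.IsAvoider lo hi k} =
    oneLine lo hi '' SPerm (Finset.Icc lo hi).card 1 (k + 1) := by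
  ext l
  rw [mem_image_toList_iff, ← exists_oneLine_eq_iff]
  constructor
  · rintro ⟨hl, σ, rfl⟩
    exact ⟨σ, (mem_SPerm_card_Icc_iff h).2 hl, rfl⟩
  · rintro ⟨σ, hσ, rfl⟩
    exact ⟨(mem_SPerm_card_Icc_iff h).1 hσ, σ, rfl⟩

theorem card_avoiders (h : lo ≤ hi) (k : ℕ) :
    (avoiders lo hi k).card = (SPerm (Finset.Icc lo hi).card 1 (k + 1)).ncard := by
  rw [← Set.ncard_image_of_injective _ (oneLine_injective lo hi), ← image_toList h,
    ((injOn_toList lo hi).mono fun w hw => hw.nodup).ncard_image,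
    Set.ncard_eq_toFinset_card _ (finite_setOf_isAvoider lo hi k), avoiders]

end MarkedWord

theorem SPerm_one_eq_empty_of_lt_two {n : ℕ} (hn : n < 2) (k : ℕ) : SPerm n 1 (k + 1) = ∅ := by
  refine Set.eq_empty_of_forall_notMem fun σ hσ => ?_
  obtain ⟨-, hpos, _, hposition, -⟩ := hσ
  exact absurd (σ.symm ⟨n - 1, hpos⟩).isLt (by omega)

theorem ncard_SPerm_succ_succ (n k : ℕ) :
    (SPerm n 1 (k + 2)).ncard =
      ∑ p ∈ Finset.HasAntidiagonal.antidiagonal (n + 1),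
        (SPerm p.1 1 1).ncard * (SPerm p.2 1 (k + 1)).ncard := by
  rcases n with - | N
  · simp [Finset.Nat.antidiagonal_succ, SPerm_one_eq_empty_of_lt_two]
  calc (SPerm (N + 1) 1 (k + 2)).ncard
    _ = (MarkedWord.avoiders 0 N (k + 1)).card := by
      rw [MarkedWord.card_avoiders N.zero_le, Nat.card_Icc, Nat.sub_zero]
    _ = ∑ b ∈ Finset.Icc 0 N, (SPerm (b + 1) 1 1).ncard * (SPerm (N - b + 1) 1 (k + 1)).ncard := by
      rw [MarkedWord.card_avoiders_succ]
      refine Finset.sum_congr rfl fun b hb => ?_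
      have hbN : b ≤ N := (Finset.mem_Icc.1 hb).2
      rw [MarkedWord.card_avoiders b.zero_le, MarkedWord.card_avoiders hbN, Nat.card_Icc,
        Nat.card_Icc, Nat.sub_zero, Nat.sub_add_comm hbN]
    _ = ∑ p ∈ Finset.HasAntidiagonal.antidiagonal N,
        (SPerm (p.1 + 1) 1 1).ncard * (SPerm (p.2 + 1) 1 (k + 1)).ncard := by
      rw [Finset.Nat.sum_antidiagonal_eq_sum_range_succ_mk, Finset.range_eq_Ico]
      rfl
    _ = ∑ p ∈ Finset.HasAntidiagonal.antidiagonal (N + 2),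
        (SPerm p.1 1 1).ncard * (SPerm p.2 1 (k + 1)).ncard := by
      rw [Finset.Nat.sum_antidiagonal_succ, Finset.Nat.sum_antidiagonal_succ']
      simp [SPerm_one_eq_empty_of_lt_two]

section GeneratingFunction

open PowerSeries

theorem coeff_pow_eq_sum_filter {R : Type*} [CommSemiring R] {f : R⟦X⟧} {c d N : ℕ} (hd : d ≤ N)
    (hf : ∀ m < c, coeff m f = 0) (k : ℕ) :
    coeff d (f ^ k) =
      ∑ m ∈ (Fintype.piFinset fun _ : Fin k => Finset.Icc c N).filter fun m => ∑ i, m i = d,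
        ∏ i, coeff (m i) f := by
  have hpow : f ^ k = ∏ _i : Fin k, f := by simp
  rw [hpow, coeff_prod]
  symm
  refine Finset.sum_of_injOn Finsupp.equivFunOnFinite.symm
    Finsupp.equivFunOnFinite.symm.injective.injOn (fun m hm => ?_) (fun m hm hm' => ?_)
    fun m _ => rfl
  · simpa using (Finset.mem_filter.1 hm).2
  · have hsum : ∑ i, m i = d := by simpa using hm
    obtain ⟨i, hi⟩ : ∃ i, m i < c := by
      by_contra! hc
      have hle (i : Fin k) : m i ≤ N :=
        ((Finset.single_le_sum_of_canonicallyOrdered (Finset.mem_univ i)).trans hsum.le).trans hd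
      exact hm' ⟨m, by simp [hsum, hc, hle], by simp⟩
    exact Finset.prod_eq_zero (Finset.mem_univ i) (hf _ hi)

/-- The generating function, in the variable `n`, of the numbers `|S_{n,k}^{1≺n}(1324)|`. -/
noncomputable def avoiderSeries (k : ℕ) : ℕ⟦X⟧ :=
  PowerSeries.mk fun n => (SPerm n 1 k).ncard

theorem coeff_avoiderSeries (n k : ℕ) : coeff n (avoiderSeries k) = (SPerm n 1 k).ncard :=
  coeff_mk _ _

theorem coeff_avoiderSeries_one_eq_zero {n : ℕ} (hn : n < 2) : coeff n (avoiderSeries 1) = 0 := by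
  rw [coeff_avoiderSeries, SPerm_one_eq_empty_of_lt_two hn, Set.ncard_empty]

theorem X_mul_avoiderSeries_succ_succ (k : ℕ) :
    X * avoiderSeries (k + 2) = avoiderSeries 1 * avoiderSeries (k + 1) := by
  ext n
  rcases n with - | n
  · rw [coeff_zero_X_mul, coeff_mul, Finset.Nat.antidiagonal_zero,
      Finset.sum_singleton, coeff_avoiderSeries_one_eq_zero two_pos, zero_mul]
  · rw [coeff_succ_X_mul, coeff_mul]
    simpa only [coeff_avoiderSeries] using ncard_SPerm_succ_succ n k

theorem X_pow_mul_avoiderSeries_succ (k : ℕ) :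
    X ^ k * avoiderSeries (k + 1) = avoiderSeries 1 ^ (k + 1) := by
  induction k with
  | zero => simp
  | succ k ih =>
    rw [pow_succ, mul_assoc, X_mul_avoiderSeries_succ_succ, mul_left_comm, ih, ← pow_succ']

end GeneratingFunction

/-- for `k ≥ 1` and `n ≥ k + 1`, `a_{n,k}` equals the sum over all
`k`-tuples `(m₁,…,m_k)` with each `mᵢ ≥ 2` and `m₁ + ⋯ + m_k = n + k - 1` of
`a_{m₁,1} ⋯ a_{m_k,1}` (unique decomposition into `k` primitives). -/
theorem stmt_7 (n k : ℕ) (hk : 1 ≤ k) (hn : k + 1 ≤ n) :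
    (SPerm n 1 k).ncard =
      ∑ m ∈ (Fintype.piFinset fun _ : Fin k => Finset.Icc 2 (n + k)) |>.filter
          (fun m => ∑ i, m i = n + k - 1),
        ∏ i, (SPerm (m i) 1 1).ncard := by
  obtain ⟨j, rfl⟩ : ∃ j, k = j + 1 := Nat.exists_eq_add_of_le' hk
  simp only [← coeff_avoiderSeries]
  calc PowerSeries.coeff n (avoiderSeries (j + 1))
    _ = PowerSeries.coeff (n + j) (PowerSeries.X ^ j * avoiderSeries (j + 1)) :=
      (PowerSeries.coeff_X_pow_mul _ _ _).symm
    _ = PowerSeries.coeff (n + j) (avoiderSeries 1 ^ (j + 1)) :=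
      congrArg _ (X_pow_mul_avoiderSeries_succ j)
    _ = _ := coeff_pow_eq_sum_filter (by omega) (fun _ => coeff_avoiderSeries_one_eq_zero) (j + 1)
end

section
/- Let a_{n,k} = |S_{n,k}^{1≺n}(1324)| and b_{n,k} = |S_{n,k}^{2≺n}(1324)|. For all n ≥ 3 and 2 ≤ k ≤ n−1, 2 · b_{n,k} = (n − k) · a_{n−1,k}. -/
/-!
Deleting the entry `1` from a permutation in `S_{n,k}^{2≺n}(1324)` leaves some
`τ ∈ S_{n-1,k}^{1≺n-1}(1324)`. Conversely, the deleted entry may be put back into any gap to the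
right of the maximum of `τ`: in a new copy of 1324 it could only play the role of `1`, and the
minimum of `τ`, further to the left, would play that role already in `τ`.

Reverse-complement preserves `S_{n-1,k}^{1≺n-1}(1324)` and exchanges the gaps to the right of the
maximum with those to the left of the minimum, so on summing over `τ` there are equally many of
both kinds. Of the `n` gaps of `τ`, only the `k` between its minimum and its maximum are of
neither kind.
-/

open Equiv Finset

section InsertMin

variable {m : ℕ}

/-- The permutation obtained from `τ` by raising all its values by one and inserting the new
minimum `0` so that it stands at position `j`. -/
def insertMin (j : Fin (m + 1)) (τ : Perm (Fin m)) : Perm (Fin (m + 1)) :=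
  (finSuccEquiv' j).trans ((optionCongr τ).trans (finSuccEquiv' 0).symm)

@[simp]
lemma insertMin_self (j : Fin (m + 1)) (τ : Perm (Fin m)) : insertMin j τ j = 0 := by
  simp [insertMin]

@[simp]
lemma insertMin_succAbove (j : Fin (m + 1)) (τ : Perm (Fin m)) (i : Fin m) :
    insertMin j τ (j.succAbove i) = (τ i).succ := by
  simp [insertMin]

@[simp]
lemma symm_insertMin_zero (j : Fin (m + 1)) (τ : Perm (Fin m)) : (insertMin j τ).symm 0 = j := by
  simp [symm_apply_eq]

@[simp]
lemma symm_insertMin_succ (j : Fin (m + 1)) (τ : Perm (Fin m)) (v : Fin m) :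
    (insertMin j τ).symm v.succ = j.succAbove (τ.symm v) := by
  simp [symm_apply_eq]

lemma insertMin_bijective :
    Function.Bijective fun x : (_ : Perm (Fin m)) × Fin (m + 1) ↦ insertMin x.2 x.1 := by
  rw [Fintype.bijective_iff_injective_and_card]
  refine ⟨?_, by simp [Fintype.card_perm, Nat.factorial_succ, mul_comm]⟩
  rintro ⟨τ, j⟩ ⟨τ', j'⟩ (h : insertMin j τ = insertMin j' τ')
  obtain rfl : j = j' := by rw [← symm_insertMin_zero j τ, h, symm_insertMin_zero]
  have values_eq (i : Fin m) : τ i = τ' i :=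
    Fin.succ_injective _ <| by rw [← insertMin_succAbove, h, insertMin_succAbove]
  rw [Equiv.ext values_eq]

lemma Avoids1324.of_insertMin {j : Fin (m + 1)} {τ : Perm (Fin m)}
    (h : Avoids1324 (insertMin j τ)) : Avoids1324 τ := by
  rintro ⟨a, b, c, d, hab, hbc, hcd, hac, hcb, hbd⟩
  refine h ⟨j.succAbove a, j.succAbove b, j.succAbove c, j.succAbove d, ?_⟩
  simpa only [insertMin_succAbove, Fin.succ_lt_succ_iff, Fin.succAbove_lt_succAbove_iff] using
    ⟨hab, hbc, hcd, hac, hcb, hbd⟩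

protected lemma Avoids1324.insertMin {j : Fin (m + 2)} {τ : Perm (Fin (m + 1))} (h : Avoids1324 τ)
    (hj : (τ.symm 0).castSucc < j) : Avoids1324 (insertMin j τ) := by
  rintro ⟨a, b, c, d, hab, hbc, hcd, hac, hcb, hbd⟩
  have ne_of_apply_lt {x : Fin (m + 2)} (hx : insertMin j τ a < insertMin j τ x) :
      x ≠ j := by
    rintro rfl
    simp at hx
  obtain ⟨b, rfl⟩ := Fin.exists_succAbove_eq (ne_of_apply_lt (hac.trans hcb))
  obtain ⟨c, rfl⟩ := Fin.exists_succAbove_eq (ne_of_apply_lt hac)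
  obtain ⟨d, rfl⟩ := Fin.exists_succAbove_eq (ne_of_apply_lt (hac.trans (hcb.trans hbd)))
  simp only [insertMin_succAbove, Fin.succ_lt_succ_iff] at hcb hbd
  rw [Fin.succAbove_lt_succAbove_iff] at hbc hcd
  rcases eq_or_ne a j with rfl | haj
  · have min_lt_b : τ.symm 0 < b :=
      Fin.castSucc_lt_castSucc_iff.1 (hj.trans_le ((Fin.lt_succAbove_iff_le_castSucc _ _).1 hab))
    have apply_c_ne_zero : τ c ≠ 0 := fun hc ↦
      (min_lt_b.trans hbc).ne' ((Equiv.eq_symm_apply τ).2 hc)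
    refine h ⟨τ.symm 0, b, c, d, min_lt_b, hbc, hcd, ?_, hcb, hbd⟩
    simpa only [apply_symm_apply] using Fin.pos_of_ne_zero apply_c_ne_zero
  · obtain ⟨a, rfl⟩ := Fin.exists_succAbove_eq haj
    simp only [insertMin_succAbove, Fin.succ_lt_succ_iff] at hac
    exact h ⟨a, b, c, d, Fin.succAbove_lt_succAbove_iff.1 hab, hbc, hcd, hac, hcb, hbd⟩

end InsertMin

section RevCompl

variable {m : ℕ}

/-- The reverse-complement `i ↦ m - 1 - τ (m - 1 - i)` of a permutation `τ` of `Fin m`, as a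
bijection of permutations: the symmetry of 1324-avoidance exchanging minimum and maximum. -/
def revCompl : Perm (Fin m) ≃ Perm (Fin m) := Fin.revPerm.permCongr

@[simp]
lemma revCompl_apply (τ : Perm (Fin m)) (i : Fin m) : revCompl τ i = (τ i.rev).rev := rfl

@[simp]
lemma symm_revCompl_apply (τ : Perm (Fin m)) (v : Fin m) :
    (revCompl τ).symm v = (τ.symm v.rev).rev := rfl

@[simp]
lemma revCompl_revCompl (τ : Perm (Fin m)) : revCompl (revCompl τ) = τ := by
  ext i
  simp

protected lemma Avoids1324.revCompl {τ : Perm (Fin m)} (h : Avoids1324 τ) :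
    Avoids1324 (revCompl τ) := by
  rintro ⟨a, b, c, d, hab, hbc, hcd, hac, hcb, hbd⟩
  simp only [revCompl_apply, Fin.rev_lt_rev] at hac hcb hbd
  exact h ⟨d.rev, c.rev, b.rev, a.rev, Fin.rev_lt_rev.2 hcd, Fin.rev_lt_rev.2 hbc,
    Fin.rev_lt_rev.2 hab, hbd, hcb, hac⟩

end RevCompl

section SPerm

variable {m k : ℕ}

lemma mem_sPerm_one {τ : Perm (Fin (m + 1))} :
    τ ∈ SPerm (m + 1) 1 k ↔
      Avoids1324 τ ∧ (τ.symm (Fin.last m) : ℕ) = (τ.symm 0 : ℕ) + k := by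
  constructor
  · rintro ⟨avoids, _, _, dist, _⟩
    exact ⟨avoids, dist⟩
  · rintro ⟨avoids, dist⟩
    exact ⟨avoids, by lia, by lia, dist, fun b hb ↦ by lia⟩

lemma mem_sPerm_two {σ : Perm (Fin (m + 2))} :
    σ ∈ SPerm (m + 2) 2 k ↔
      Avoids1324 σ ∧ (σ.symm (Fin.last (m + 1)) : ℕ) = (σ.symm 1 : ℕ) + k ∧
        σ.symm (Fin.last (m + 1)) < σ.symm 0 := by
  constructor
  · rintro ⟨avoids, _, _, dist, right⟩
    exact ⟨avoids, dist, right 0 (by simp)⟩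
  · rintro ⟨avoids, dist, right⟩
    refine ⟨avoids, by lia, by lia, dist, fun b hb ↦ ?_⟩
    obtain rfl : b = 0 := Fin.ext (by rw [Fin.val_zero]; lia)
    exact right

lemma revCompl_mem_sPerm_one {τ : Perm (Fin (m + 1))} (h : τ ∈ SPerm (m + 1) 1 k) :
    revCompl τ ∈ SPerm (m + 1) 1 k := by
  rw [mem_sPerm_one] at h ⊢
  refine ⟨h.1.revCompl, ?_⟩
  simp only [symm_revCompl_apply, Fin.rev_last, Fin.rev_zero, Fin.val_rev]
  lia

lemma revCompl_mem_sPerm_one_iff {τ : Perm (Fin (m + 1))} :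
    revCompl τ ∈ SPerm (m + 1) 1 k ↔ τ ∈ SPerm (m + 1) 1 k :=
  ⟨fun h ↦ revCompl_revCompl τ ▸ revCompl_mem_sPerm_one h, revCompl_mem_sPerm_one⟩

lemma val_eq_val_succAbove_add_iff {j : Fin (m + 1)} {p q : Fin m} (hq : q.castSucc < j) :
    (q : ℕ) = (j.succAbove p : ℕ) + k ↔ (q : ℕ) = p + k := by
  rcases lt_or_ge p.castSucc j with hp | hp
  · rw [Fin.succAbove_of_castSucc_lt _ _ hp, Fin.val_castSucc]
  · have hqp : (q : ℕ) < p := hq.trans_le hp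
    rw [Fin.succAbove_of_le_castSucc _ _ hp, Fin.val_succ]
    lia

lemma insertMin_mem_sPerm_two_iff {j : Fin (m + 2)} {τ : Perm (Fin (m + 1))} :
    insertMin j τ ∈ SPerm (m + 2) 2 k ↔
      τ ∈ SPerm (m + 1) 1 k ∧ (τ.symm (Fin.last m)).castSucc < j := by
  rw [mem_sPerm_one, mem_sPerm_two, ← Fin.succ_last, ← Fin.succ_zero_eq_one, symm_insertMin_zero,
    symm_insertMin_succ, symm_insertMin_succ, Fin.succAbove_lt_iff_castSucc_lt, ← and_assoc]
  refine and_congr_left fun hj ↦ ?_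
  rw [Fin.succAbove_of_castSucc_lt _ _ hj, Fin.val_castSucc, val_eq_val_succAbove_add_iff hj]
  refine and_congr_left fun dist ↦ ⟨Avoids1324.of_insertMin, fun h ↦ h.insertMin ?_⟩
  have min_le_max : τ.symm 0 ≤ τ.symm (Fin.last m) := Fin.le_def.2 (by lia)
  exact (Fin.castSucc_le_castSucc_iff.2 min_le_max).trans_lt hj

open scoped Classical in
lemma ncard_sPerm_two_eq_sum_gaps_right :
    (SPerm (m + 2) 2 k).ncard =
      ∑ τ ∈ (SPerm (m + 1) 1 k).toFinset, (m + 1 - (τ.symm (Fin.last m) : ℕ)) := calc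
  _ = #(SPerm (m + 2) 2 k).toFinset := Set.ncard_eq_toFinset_card' _
  _ = #((SPerm (m + 1) 1 k).toFinset.sigma fun τ ↦ Ioi (τ.symm (Fin.last m)).castSucc) :=
    (card_bijective _ insertMin_bijective fun x ↦ by
      simp [insertMin_mem_sPerm_two_iff]).symm
  _ = _ := by simp [card_sigma, Fin.card_Ioi]

open scoped Classical in
lemma ncard_sPerm_two_eq_sum_gaps_left :
    (SPerm (m + 2) 2 k).ncard =
      ∑ τ ∈ (SPerm (m + 1) 1 k).toFinset, ((τ.symm 0 : ℕ) + 1) := by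
  rw [ncard_sPerm_two_eq_sum_gaps_right]
  refine sum_equiv revCompl (fun τ ↦ by simp [revCompl_mem_sPerm_one_iff]) fun τ _ ↦ ?_
  rw [symm_revCompl_apply, Fin.rev_zero, Fin.val_rev]
  lia

end SPerm

theorem stmt_8_general (n k : ℕ) (hn : 2 ≤ n) :
    2 * (SPerm n 2 k).ncard = (n - k) * (SPerm (n - 1) 1 k).ncard := by
  classical
  obtain ⟨m, rfl⟩ := Nat.exists_eq_add_of_le' hn
  let A := (SPerm (m + 1) 1 k).toFinset
  have gaps_add_gaps (τ) (hτ : τ ∈ A) :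
      m + 1 - (τ.symm (Fin.last m) : ℕ) + ((τ.symm 0 : ℕ) + 1) = m + 2 - k := by
    have dist := (mem_sPerm_one.1 (Set.mem_toFinset.1 hτ)).2
    lia
  calc 2 * (SPerm (m + 2) 2 k).ncard
    _ = ∑ τ ∈ A, (m + 1 - (τ.symm (Fin.last m) : ℕ)) + ∑ τ ∈ A, ((τ.symm 0 : ℕ) + 1) :=
      (two_mul _).trans <|
        congrArg₂ _ ncard_sPerm_two_eq_sum_gaps_right ncard_sPerm_two_eq_sum_gaps_left
    _ = ∑ _τ ∈ A, (m + 2 - k) := by rw [← sum_add_distrib, sum_congr rfl gaps_add_gaps]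
    _ = (m + 2 - k) * (SPerm (m + 1) 1 k).ncard := by
      rw [Set.ncard_eq_toFinset_card', sum_const, smul_eq_mul, mul_comm]

/-- with `a_{n,k} = |S_{n,k}^{1≺n}(1324)|` and `b_{n,k} = |S_{n,k}^{2≺n}(1324)|`,
for `n ≥ 3` and `2 ≤ k ≤ n - 1`, `2 b_{n,k} = (n - k) a_{n-1,k}`. -/
theorem stmt_8 (n k : ℕ) (hn : 3 ≤ n) (hk : 2 ≤ k) (hkn : k ≤ n - 1) :
    2 * (SPerm n 2 k).ncard = (n - k) * (SPerm (n - 1) 1 k).ncard :=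
  stmt_8_general n k (by lia)
end

section
/- Let a_{n,k} = |S_{n,k}^{1≺n}(1324)| and b_{n,k} = |S_{n,k}^{2≺n}(1324)| (each 0 when no such permutations exist). In the ring of formal power series over the rationals, define f = Σ_{n≥1} a_{n+1,1} x^n, T_{2,0} = x², and for j ≥ 1, T_{2,j} = Σ_{n≥1} b_{n,j} x^n. Then for every k ≥ 2, T_{2,k} = f^k · T_{2,0} + k · f^{k−1} · (T_{2,1} − f · T_{2,0}). -/
/-!
Write a permutation as a word on `0, …, n` and let `p` be the entry just before `n`.  Avoiding 1324
forces, on either side of `n`, all entries above `p` to come before all entries below `p` (if `0`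
stands to the left of `n`).  So the word is determined by the subword `M` of entries `≤ p` and the
subword `U` of entries `≥ p`; conversely any such pair of avoiding words glues to an avoiding word.
The minimum of `U` is adjacent to its maximum, and the distance from minimum to maximum is one
smaller in `M` than in the glued word, so the generating function for distance `k` is `f ^ k`.

The number of entries to the right of the maximum is additive under gluing, so its generating
function obeys the Leibniz rule and equals `k f ^ (k - 1) g`, where `g` is the one for `k = 1`.
If the minimum of an avoiding word stands to the left of its maximum, a new minimum can be inserted
anywhere to the right of the maximum without creating a 1324; with `t` entries after the maximum
there are `t + 1` such places.  Hence `T_{2,k} = x ^ 2 (f ^ k + k f ^ (k - 1) g)`.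
-/

namespace Words1324

open List

/-! ### Lists -/

section ListLemmas

variable {α β : Type*}

theorem cons_sublist_of_cons_sublist_append {a : α} {l l₁ l₂ : List α}
    (h : a :: l <+ l₁ ++ l₂) (ha : a ∉ l₁) : a :: l <+ l₂ := by
  induction l₁ with
  | nil => exact h
  | cons b l₁ ih =>
    rw [mem_cons, not_or] at ha
    exact ih (h.of_cons_of_ne ha.1) ha.2

theorem concat_sublist_of_concat_sublist_append {a : α} {l l₁ l₂ : List α}
    (h : l ++ [a] <+ l₁ ++ l₂) (ha : a ∉ l₂) : l ++ [a] <+ l₁ := by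
  rw [← reverse_sublist, reverse_append] at h ⊢
  exact cons_sublist_of_cons_sublist_append (by simpa using h) (by simpa using ha)

theorem filter_append_eq_left {p : α → Bool} {l₁ l₂ : List α} (h₁ : ∀ x ∈ l₁, p x)
    (h₂ : ∀ x ∈ l₂, ¬ p x) : (l₁ ++ l₂).filter p = l₁ := by
  rw [filter_append, filter_eq_self.2 h₁, filter_eq_nil_iff.2 h₂, append_nil]

theorem filter_append_eq_right {p : α → Bool} {l₁ l₂ : List α} (h₁ : ∀ x ∈ l₁, ¬ p x)
    (h₂ : ∀ x ∈ l₂, p x) : (l₁ ++ l₂).filter p = l₂ := by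
  rw [filter_append, filter_eq_nil_iff.2 h₁, filter_eq_self.2 h₂, nil_append]

theorem eq_filter_append_filter_not {p : α → Bool} {l : List α}
    (h : l.Pairwise fun a b => p b → p a) : l = l.filter p ++ l.filter (!p ·) := by
  induction h with
  | nil => rfl
  | @cons a l ha _ ih =>
    by_cases hp : p a
    · simpa [hp] using ih
    · have hl : ∀ b ∈ l, ¬ p b := fun b hb hpb => hp (ha b hb hpb)
      simpa [hp, filter_eq_nil_iff.2 hl, eq_comm (a := l)] using hl

theorem append_perm_append_iff (p : α → Bool) {l₁ l₂ l₁' l₂' : List α}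
    (h₁ : ∀ x ∈ l₁, p x) (h₁' : ∀ x ∈ l₁', p x) (h₂ : ∀ x ∈ l₂, ¬ p x)
    (h₂' : ∀ x ∈ l₂', ¬ p x) : l₁ ++ l₂ ~ l₁' ++ l₂' ↔ l₁ ~ l₁' ∧ l₂ ~ l₂' := by
  refine ⟨fun h => ?_, fun h => h.1.append h.2⟩
  have hleft : l₁ ~ l₁' := by
    simpa only [filter_append_eq_left h₁ h₂, filter_append_eq_left h₁' h₂'] using h.filter p
  exact ⟨hleft, (perm_append_left_iff l₁).1 (h.trans (hleft.symm.append_right l₂'))⟩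

theorem idxOf_map_of_injective [DecidableEq α] [DecidableEq β] {f : α → β}
    (hf : Function.Injective f) (a : α) (l : List α) : (l.map f).idxOf (f a) = l.idxOf a := by
  induction l with
  | nil => rfl
  | cons b l ih => simp [idxOf_cons, ih, hf.eq_iff, cond_eq_ite]

theorem idxOf_append_cons_self [DecidableEq α] {a : α} {l₁ : List α} (ha : a ∉ l₁)
    (l₂ : List α) : (l₁ ++ a :: l₂).idxOf a = l₁.length := by
  simp [idxOf_append, ha]

theorem eq_append_cons_cons_of_idxOf_eq_succ [DecidableEq α] {a b : α} {l : List α} (hb : b ∈ l)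
    (h : l.idxOf b = l.idxOf a + 1) : ∃ l₁ l₂, l = l₁ ++ a :: b :: l₂ := by
  have ha : a ∈ l := idxOf_lt_length_iff.1 (by have := idxOf_lt_length_iff.2 hb; omega)
  obtain ⟨l₁, l₂, rfl, ha₁⟩ := eq_append_cons_of_mem ha
  have hb_get := getElem?_idxOf hb
  rw [h, idxOf_append_cons_self ha₁] at hb_get
  obtain ⟨l₂, rfl⟩ : ∃ l, l₂ = b :: l := by
    cases l₂ <;> simp_all
  exact ⟨l₁, l₂, rfl⟩

end ListLemmas

/-- The word `w` has no four entries, from left to right, in the relative order 1324. -/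
def AvoidsWord {α : Type*} [LT α] (w : List α) : Prop :=
  ∀ ⦃a b c d⦄, [a, c, b, d] <+ w → a < b → b < c → ¬ c < d

namespace AvoidsWord

theorem sublist {α : Type*} [LT α] {v w : List α} (hw : AvoidsWord w) (h : v <+ w) :
    AvoidsWord v :=
  fun _ _ _ _ hs => hw (hs.trans h)

theorem map_iff_forall {α β : Type*} [LT β] {f : α → β} {w : List α} :
    AvoidsWord (w.map f) ↔
      ∀ ⦃a b c d⦄, [a, c, b, d] <+ w → f a < f b → f b < f c → ¬ f c < f d := by
  refine ⟨fun h a b c d hs => h (hs.map f), fun h a b c d hs => ?_⟩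
  obtain ⟨v, hv, hv_map⟩ := sublist_map_iff.1 hs
  obtain ⟨a, v₁, rfl, rfl, hv₁⟩ := map_eq_cons_iff.1 hv_map.symm
  obtain ⟨c, v₂, rfl, rfl, hv₂⟩ := map_eq_cons_iff.1 hv₁
  obtain ⟨b, v₃, rfl, rfl, hv₃⟩ := map_eq_cons_iff.1 hv₂
  obtain ⟨d, v₄, rfl, rfl, hv₄⟩ := map_eq_cons_iff.1 hv₃
  obtain rfl := map_eq_nil_iff.1 hv₄
  exact h hv

theorem map_iff {α β : Type*} [LinearOrder α] [Preorder β] {f : α → β} (hf : StrictMono f)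
    {w : List α} : AvoidsWord (w.map f) ↔ AvoidsWord w := by
  rw [map_iff_forall]
  simp only [hf.lt_iff_lt, AvoidsWord]

section LinearOrder

variable {α : Type*} [LinearOrder α]

theorem insert_min_iff {z x : α} {A B : List α} (hxA : x ∈ A) (hxB : ∀ y ∈ B, x < y)
    (hz : ∀ y ∈ A ++ B, z < y) : AvoidsWord (A ++ z :: B) ↔ AvoidsWord (A ++ B) := by
  refine ⟨fun h => h.sublist (by simp), fun h a b c d hs hab hbc hcd => ?_⟩
  have hzA : z ∉ A := fun hzA => lt_irrefl z (hz z (mem_append_left B hzA))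
  by_cases haz : a = z
  · subst haz
    have hcbd : [c, b, d] <+ B := by
      simpa using cons_sublist_of_cons_sublist_append hs hzA
    have hxcbd : [x, c, b, d] <+ A ++ B := (singleton_sublist.2 hxA).append hcbd
    exact h hxcbd (hxB b (hcbd.subset (by simp))) hbc hcd
  · have ha : z < a := by
      have ha_mem := hs.subset (mem_cons_self (a := a))
      grind
    have hpattern : [a, c, b, d].filter (z < ·) = [a, c, b, d] := filter_eq_self.2 (by grind)
    have hfilter : (A ++ z :: B).filter (z < ·) = A ++ B := by
      rw [filter_append, filter_cons_of_neg (by simp), ← filter_append]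
      exact filter_eq_self.2 (by simpa using hz)
    exact h (hpattern ▸ hfilter ▸ hs.filter (z < ·)) hab hbc hcd

section Inflation

variable {p : α} {H₁ L₁ H₂ L₂ : List α}

theorem filter_le_inflation (hH : ∀ x ∈ H₁ ++ H₂, p < x) (hL : ∀ x ∈ L₁ ++ L₂, x < p) :
    (H₁ ++ L₁ ++ p :: (H₂ ++ L₂)).filter (· ≤ p) = L₁ ++ p :: L₂ := by
  simp only [mem_append, or_imp, forall_and] at hH hL
  rw [append_assoc, filter_append, filter_eq_nil_iff.2 (by grind), nil_append, filter_append,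
    filter_eq_self.2 (by grind), filter_cons_of_pos (by simp),
    filter_append_eq_right (by grind) (by grind)]

theorem filter_ge_inflation (hH : ∀ x ∈ H₁ ++ H₂, p < x) (hL : ∀ x ∈ L₁ ++ L₂, x < p) :
    (H₁ ++ L₁ ++ p :: (H₂ ++ L₂)).filter (p ≤ ·) = H₁ ++ p :: H₂ := by
  simp only [mem_append, or_imp, forall_and] at hH hL
  rw [filter_append, filter_append_eq_left (by grind) (by grind), filter_cons_of_pos (by simp),
    filter_append_eq_left (by grind) (by grind)]

theorem inflation_iff (hH : ∀ x ∈ H₁ ++ H₂, p < x) (hL : ∀ x ∈ L₁ ++ L₂, x < p) :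
    AvoidsWord (H₁ ++ L₁ ++ p :: (H₂ ++ L₂)) ↔
      AvoidsWord (L₁ ++ p :: L₂) ∧ AvoidsWord (H₁ ++ p :: H₂) := by
  refine ⟨fun h => ⟨?_, ?_⟩, fun ⟨hM, hU⟩ a b c d hs hab hbc hcd => ?_⟩
  · exact filter_le_inflation hH hL ▸ h.sublist filter_sublist
  · exact filter_ge_inflation hH hL ▸ h.sublist filter_sublist
  rcases le_or_gt d p with hdp | hpd
  · have hpattern : [a, c, b, d].filter (· ≤ p) = [a, c, b, d] := filter_eq_self.2 (by grind)
    exact hM (hpattern ▸ filter_le_inflation hH hL ▸ hs.filter (· ≤ p)) hab hbc hcd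
  rcases le_or_gt p a with hpa | hap
  · have hpattern : [a, c, b, d].filter (p ≤ ·) = [a, c, b, d] := filter_eq_self.2 (by grind)
    exact hU (hpattern ▸ filter_ge_inflation hH hL ▸ hs.filter (p ≤ ·)) hab hbc hcd
  have hmid : [a, c, b, d] <+ L₁ ++ p :: H₂ := by
    have hleft : [a, c, b, d] <+ H₁ ++ (L₁ ++ p :: H₂) :=
      concat_sublist_of_concat_sublist_append (l := [a, c, b]) (l₂ := L₂) (by simpa using hs)
        (by grind)
    exact cons_sublist_of_cons_sublist_append hleft (by grind)
  rcases lt_or_ge c p with hcp | hpc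
  · have hacb : [a, c, b] <+ L₁ := by
      have hacb := (Sublist.trans (by simp) hmid : [a, c, b] <+ L₁ ++ p :: H₂)
      exact hacb.of_sublist_append_left (by grind)
    have hacbp : [a, c, b, p] <+ L₁ ++ p :: L₂ := hacb.append (by simp)
    exact hM hacbp hab hbc hcp
  · have hcbd : [c, b, d] <+ p :: H₂ :=
      cons_sublist_of_cons_sublist_append ((sublist_cons_self a _).trans hmid)
        fun hc => hpc.not_gt (hL c (mem_append_left L₂ hc))
    have hpb : p ≤ b := by
      have hb_mem := hcbd.subset (by simp : b ∈ [c, b, d])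
      grind
    have hcbd : [c, b, d] <+ H₂ := hcbd.of_cons_of_ne (by order)
    have hpcbd : [p, c, b, d] <+ H₁ ++ p :: H₂ := (hcbd.cons_cons p).trans (by simp)
    exact hU hpcbd (hH b (by grind)) hbc hcd

end Inflation

theorem pairwise_left {X Y : List α} {p m : α} (h : AvoidsWord (X ++ p :: m :: Y))
    (hXm : ∀ x ∈ X, x < m) (hp : p ∉ X) : X.Pairwise fun x y => p < y → p < x := by
  rw [pairwise_iff_forall_sublist]
  intro x y hxy hpy
  by_contra! hxp
  have hxp : x < p := hxp.lt_of_ne (ne_of_mem_of_not_mem (hxy.subset (by simp)) hp)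
  have hs : [x, y, p, m] <+ X ++ p :: m :: Y := hxy.append (by simp)
  exact h hs hxp hpy (hXm y (hxy.subset (by simp)))

theorem pairwise_right {X Y : List α} {p z : α} (h : AvoidsWord (X ++ p :: Y))
    (hz : z ∈ X ++ [p]) (hzY : ∀ y ∈ Y, z < y) (hp : p ∉ Y) :
    Y.Pairwise fun x y => p < y → p < x := by
  rw [pairwise_iff_forall_sublist]
  intro x y hxy hpy
  by_contra! hxp
  have hxp : x < p := hxp.lt_of_ne (ne_of_mem_of_not_mem (hxy.subset (by simp)) hp)
  have hzx : z < x := hzY x (hxy.subset (by simp))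
  have hzX : z ∈ X := by simpa [(hzx.trans hxp).ne] using hz
  have hs : [z, p, x, y] <+ X ++ p :: Y := (singleton_sublist.2 hzX).append (hxy.cons_cons p)
  exact h hs hzx hxp hpy

end LinearOrder

end AvoidsWord

/-! ### Gluing words at the minimum -/

/-- The words that encode `SPerm (n + 1) (a + 1) k`: arrangements of the letters `0, …, n` that
avoid 1324, where `n` stands `k` places to the right of `a` and every letter below `a` stands to
the right of `n`. -/
noncomputable def words (n a k : ℕ) : Finset (List ℕ) := open Classical in
  {w ∈ (range (n + 1)).permutations.toFinset | AvoidsWord w ∧ w.idxOf n = w.idxOf a + k ∧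
    ∀ b < a, w.idxOf n < w.idxOf b}

theorem mem_words {n a k : ℕ} {w : List ℕ} :
    w ∈ words n a k ↔ w ~ range (n + 1) ∧ AvoidsWord w ∧ w.idxOf n = w.idxOf a + k ∧
      ∀ b < a, w.idxOf n < w.idxOf b := by
  simp [words]

theorem mem_words_zero {n k : ℕ} {w : List ℕ} :
    w ∈ words n 0 k ↔ w ~ range (n + 1) ∧ AvoidsWord w ∧ w.idxOf n = w.idxOf 0 + k := by
  simp [mem_words]

theorem le_of_perm_range {n x : ℕ} {w : List ℕ} (hw : w ~ range (n + 1)) (hx : x ∈ w) : x ≤ n :=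
  Nat.le_of_lt_succ (mem_range.1 (hw.subset hx))

theorem mem_of_perm_range {n x : ℕ} {w : List ℕ} (hw : w ~ range (n + 1)) (hx : x ≤ n) : x ∈ w :=
  hw.symm.subset (mem_range.2 (Nat.lt_succ_of_le hx))

/-- The number of entries of `w` to the right of (the first occurrence of) `m`. -/
def trailing {α : Type*} [DecidableEq α] (m : α) (w : List α) : ℕ :=
  w.length - (w.idxOf m + 1)

theorem lt_of_mem_map_add {p : ℕ} {H : List ℕ} (hH : ∀ x ∈ H, 0 < x) :
    ∀ x ∈ H.map (p + ·), p < x :=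
  forall_mem_map.2 fun x hx => Nat.lt_add_of_pos_right (hH x hx)

/-- `w` arises from `U` by raising all entries by `p` and replacing the entry `p`, the former
minimum, by the word `M` on `0, …, p`, cut into two parts: the part up to the maximum `p` of `M`
takes the place of the minimum, the rest moves to the end.  In `U` the minimum is immediately
followed by `q`, so that in `w` the maximum `p` of `M` is immediately followed by `p + q`. -/
inductive IsGluing (p q : ℕ) : List ℕ → List ℕ → List ℕ → Prop
  | intro (H₁ L₁ H₂ L₂ : List ℕ) (hL : ∀ x ∈ L₁ ++ L₂, x < p) (hH : ∀ x ∈ H₁ ++ q :: H₂, 0 < x)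
      (hq : q ∉ H₁ ++ H₂) :
      IsGluing p q (L₁ ++ p :: L₂) (H₁ ++ 0 :: q :: H₂)
        (H₁.map (p + ·) ++ L₁ ++ p :: ((q :: H₂).map (p + ·) ++ L₂))

namespace IsGluing

variable {p q : ℕ} {M U w : List ℕ}

theorem eq_append (h : IsGluing p q M U w) :
    ∃ X Y, w = (X ++ [p]) ++ (p + q) :: Y ∧ X.length = U.idxOf 0 + M.idxOf p ∧
      p + q ∉ X ++ [p] ∧ p + q ∉ Y := by
  obtain ⟨H₁, L₁, H₂, L₂, hL, hH, hq⟩ := h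
  have hq_pos : 0 < q := hH q (by simp)
  have hqL : p + q ∉ L₁ ++ L₂ := fun hqL => absurd (hL _ hqL) (by omega)
  have hp : p ∉ L₁ := fun hp => (hL p (mem_append_left _ hp)).false
  have h0 : 0 ∉ H₁ := fun h0 => (hH 0 (mem_append_left _ h0)).false
  rw [mem_append, not_or] at hq hqL
  refine ⟨H₁.map (p + ·) ++ L₁, H₂.map (p + ·) ++ L₂, by simp, ?_, ?_, ?_⟩
  · simp [idxOf_append_cons_self hp, idxOf_append_cons_self h0]
  · simp [hq.1, hqL.1, hq_pos.ne']
  · simp [hq.2, hqL.2]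

theorem filter_le (h : IsGluing p q M U w) : w.filter (· ≤ p) = M := by
  obtain ⟨H₁, L₁, H₂, L₂, hL, hH, -⟩ := h
  exact AvoidsWord.filter_le_inflation (map_append ▸ lt_of_mem_map_add hH) hL

theorem filter_ge (h : IsGluing p q M U w) : w.filter (p ≤ ·) = U.map (p + ·) := by
  obtain ⟨H₁, L₁, H₂, L₂, hL, hH, -⟩ := h
  rw [AvoidsWord.filter_ge_inflation (map_append ▸ lt_of_mem_map_add hH) hL]
  simp

theorem right_unique {w' : List ℕ} (h : IsGluing p q M U w) (h' : IsGluing p q M U w') :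
    w = w' := by
  generalize hM : M = M' at h'
  generalize hU : U = U' at h'
  obtain ⟨H₁, L₁, H₂, L₂, hL, hH, -⟩ := h
  obtain ⟨H₁', L₁', H₂', L₂', hL', hH', -⟩ := h'
  obtain ⟨rfl, -, rfl⟩ := (append_cons_inj_of_notMem
    (fun hp => (hL' p (mem_append_left _ hp)).false)
    (fun hp => (hL' p (mem_append_right _ hp)).false)).1 hM.symm
  obtain ⟨rfl, -, hqH⟩ := (append_cons_inj_of_notMem
    (fun h0 => (hH' 0 (mem_append_left _ h0)).false)
    (fun h0 => (hH' 0 (mem_append_right _ h0)).false)).1 hU.symm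
  rw [(cons_inj_right q).1 hqH]

theorem left_unique {p' q' : ℕ} {M' U' : List ℕ} (h : IsGluing p q M U w)
    (h' : IsGluing p' q' M' U' w) (hn : p + q = p' + q') :
    (p = p' ∧ q = q') ∧ M = M' ∧ U = U' := by
  obtain ⟨X, Y, hw, -⟩ := h.eq_append
  obtain ⟨X', Y', hw', -, hnX', hnY'⟩ := h'.eq_append
  rw [← hn] at hw' hnX' hnY'
  have hX : X' ++ [p'] = X ++ [p] :=
    ((append_cons_inj_of_notMem hnX' hnY').1 (hw'.symm.trans hw)).1
  obtain rfl : p = p' := by simpa using (congrArg getLast? hX).symm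
  obtain rfl : q = q' := Nat.add_left_cancel hn
  refine ⟨⟨rfl, rfl⟩, h.filter_le.symm.trans h'.filter_le, ?_⟩
  exact map_injective_iff.2 (add_right_injective p) (h.filter_ge.symm.trans h'.filter_ge)

theorem perm_range_iff (h : IsGluing p q M U w) :
    w ~ range (p + q + 1) ↔ M ~ range (p + 1) ∧ U ~ range (q + 1) := by
  obtain ⟨H₁, L₁, H₂, L₂, hL, hH, -⟩ := h
  have hw : H₁.map (p + ·) ++ L₁ ++ p :: ((q :: H₂).map (p + ·) ++ L₂) ~
      (L₁ ++ p :: L₂) ++ (H₁ ++ q :: H₂).map (p + ·) := by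
    simp only [perm_iff_count, count_append, count_cons, map_append]
    intro
    omega
  have hrange : range (p + q + 1) = range (p + 1) ++ ((range q).map Nat.succ).map (p + ·) := by
    rw [Nat.add_right_comm, range_add, map_map]
    congr 2
    funext x
    simp only [Function.comp]
    omega
  have hU : H₁ ++ 0 :: q :: H₂ ~ range (q + 1) ↔ H₁ ++ q :: H₂ ~ (range q).map Nat.succ := by
    rw [range_succ_eq_map, perm_middle.congr_left, perm_cons]
  rw [hw.congr_left, hrange, hU, append_perm_append_iff (· ≤ p),
    map_perm_map_iff (add_right_injective p)]
  · have hM_le := fun x hx => (hL x hx).le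
    grind
  · grind
  · grind
  · grind

theorem avoidsWord_iff (h : IsGluing p q M U w) :
    AvoidsWord w ↔ AvoidsWord M ∧ AvoidsWord U := by
  obtain ⟨H₁, L₁, H₂, L₂, hL, hH, -⟩ := h
  rw [AvoidsWord.inflation_iff (map_append ▸ lt_of_mem_map_add hH) hL,
    ← AvoidsWord.map_iff (f := (p + ·)) (fun _ _ hxy => Nat.add_lt_add_left hxy p)
      (w := _ ++ 0 :: _)]
  simp

theorem idxOf_max_right (h : IsGluing p q M U w) : U.idxOf q = U.idxOf 0 + 1 := by
  obtain ⟨H₁, L₁, H₂, L₂, -, hH, hq⟩ := h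
  rw [mem_append, not_or] at hq
  have h0 : 0 ∉ H₁ := fun h0 => (hH 0 (mem_append_left _ h0)).false
  have hq0 : 0 ≠ q := (hH q (by simp)).ne
  simp [idxOf_append, hq.1, h0, hq0, Nat.add_comm 1]

theorem idxOf_max (h : IsGluing p q M U w) : w.idxOf (p + q) = U.idxOf 0 + M.idxOf p + 1 := by
  obtain ⟨X, Y, rfl, hX_length, hX, -⟩ := h.eq_append
  rw [idxOf_append_cons_self hX, length_append, hX_length, length_singleton]

theorem idxOf_zero (h : IsGluing p q M U w) :
    w.idxOf 0 = U.idxOf 0 + M.idxOf 0 ∨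
      M.idxOf p < M.idxOf 0 ∧ w.idxOf (p + q) < w.idxOf 0 := by
  have hmax := h.idxOf_max
  obtain ⟨H₁, L₁, H₂, L₂, hL, hH, -⟩ := h
  have hp : p ∉ L₁ := fun hp => (hL p (mem_append_left _ hp)).false
  have h0 : 0 ∉ H₁ := fun h0 => (hH 0 (mem_append_left _ h0)).false
  have hraised : ∀ x ∈ (H₁ ++ q :: H₂).map (p + ·), 0 ≠ x := fun x hx =>
    (Nat.zero_le p).trans_lt (lt_of_mem_map_add hH x hx) |>.ne
  rw [hmax, idxOf_append_cons_self hp, idxOf_append_cons_self h0]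
  by_cases h0L : 0 ∈ L₁ ++ [p]
  · left
    grind
  · right
    grind

theorem length_add_one (h : IsGluing p q M U w) : w.length + 1 = M.length + U.length := by
  obtain ⟨H₁, L₁, H₂, L₂, -, -, -⟩ := h
  simp only [length_append, length_cons, length_map]
  omega

theorem mem_words_iff (h : IsGluing p q M U w) {k : ℕ} :
    w ∈ words (p + q) 0 (k + 1) ↔ M ∈ words p 0 k ∧ U ∈ words q 0 1 := by
  have hU := h.idxOf_max_right
  have hM : w.idxOf (p + q) = w.idxOf 0 + (k + 1) ↔ M.idxOf p = M.idxOf 0 + k := by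
    have hmax := h.idxOf_max
    have h0 := h.idxOf_zero
    omega
  rw [mem_words_zero, mem_words_zero, mem_words_zero, h.perm_range_iff, h.avoidsWord_iff, hM]
  tauto

theorem trailing_eq (h : IsGluing p q M U w) :
    trailing (p + q) w = trailing p M + trailing q U := by
  have hmax := h.idxOf_max
  have hU := h.idxOf_max_right
  have hlength := h.length_add_one
  obtain ⟨hM_lt, hU_lt⟩ : M.idxOf p < M.length ∧ U.idxOf q < U.length := by
    rw [idxOf_lt_length_iff, idxOf_lt_length_iff]
    cases h
    simp
  simp only [trailing]
  omega

end IsGluing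

theorem exists_eq_map_add_append {p : ℕ} {X : List ℕ} (hp : p ∉ X)
    (h : X.Pairwise fun x y => p < y → p < x) :
    ∃ H L : List ℕ, X = H.map (p + ·) ++ L ∧ (∀ x ∈ H, 0 < x) ∧ ∀ x ∈ L, x < p := by
  refine ⟨(X.filter (p < ·)).map (· - p), X.filter fun x => !decide (p < x), ?_, ?_, ?_⟩
  · have hraise : ((X.filter (p < ·)).map (· - p)).map (p + ·) = X.filter (p < ·) := by
      rw [map_map]
      exact (map_congr_left (by grind)).trans (map_id _)
    rw [hraise]
    exact eq_filter_append_filter_not (by simpa using h)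
  · grind
  · grind

theorem exists_isGluing {p q k : ℕ} {M U : List ℕ} (hM : M ∈ words p 0 k)
    (hU : U ∈ words q 0 1) : ∃ w, IsGluing p q M U w := by
  rw [mem_words_zero] at hM hU
  obtain ⟨L₁, L₂, rfl⟩ := append_of_mem (mem_of_perm_range hM.1 le_rfl)
  obtain ⟨H₁, H₂, rfl⟩ :=
    eq_append_cons_cons_of_idxOf_eq_succ (mem_of_perm_range hU.1 le_rfl) hU.2.2
  have hM_nodup : (L₁ ++ p :: L₂).Nodup := hM.1.nodup_iff.2 nodup_range
  have hU_nodup : (H₁ ++ 0 :: q :: H₂).Nodup := hU.1.nodup_iff.2 nodup_range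
  have hp : p ∉ L₁ ++ L₂ := (nodup_middle.1 hM_nodup).notMem
  have h0 : 0 ∉ H₁ ++ q :: H₂ := (nodup_middle.1 hU_nodup).notMem
  have hq : q ∉ H₁ ++ H₂ := (nodup_middle.1 (hU_nodup.sublist (by simp))).notMem
  refine ⟨_, .intro H₁ L₁ H₂ L₂ (fun x hx => ?_) (fun x hx => ?_) hq⟩
  · refine (le_of_perm_range hM.1 ?_).lt_of_ne (ne_of_mem_of_not_mem hx hp)
    exact perm_middle.symm.subset (mem_cons_of_mem p hx)
  · exact Nat.pos_of_ne_zero (ne_of_mem_of_not_mem hx h0)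

theorem exists_isGluing_of_mem_words {n k : ℕ} {w : List ℕ} (hw : w ∈ words n 0 (k + 1)) :
    ∃ p q M U, p + q = n ∧ IsGluing p q M U w := by
  obtain ⟨hperm, havoids, hidx⟩ := mem_words_zero.1 hw
  have hn : n ∈ w := mem_of_perm_range hperm le_rfl
  obtain ⟨X', Y, rfl, hnX'⟩ := eq_append_cons_of_mem hn
  obtain rfl | ⟨X, p, rfl⟩ := X'.eq_nil_or_concat'
  · simp at hidx
  have h0 : 0 ∈ X ++ [p] := by
    rw [idxOf_append_cons_self hnX'] at hidx
    by_contra h0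
    rw [idxOf_append_of_notMem h0] at hidx
    omega
  have hnodup : (X ++ [p] ++ n :: Y).Nodup := hperm.nodup_iff.2 nodup_range
  have hlt : ∀ x ∈ X ++ [p] ++ Y, x < n := fun x hx =>
    (le_of_perm_range hperm (perm_middle.symm.subset (mem_cons_of_mem n hx))).lt_of_ne
      (ne_of_mem_of_not_mem hx (nodup_middle.1 hnodup).notMem)
  have hp : p ∉ X ++ Y := (nodup_middle.1 (hnodup.sublist (by simp) : (X ++ p :: Y).Nodup)).notMem
  have h0Y : ∀ y ∈ Y, 0 < y := fun y hy => Nat.pos_of_ne_zero <| by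
    rintro rfl
    exact (nodup_append.1 hnodup).2.2 0 h0 0 (mem_cons_of_mem n hy) rfl
  rw [mem_append, not_or] at hp
  obtain ⟨H₁, L₁, rfl, hH₁, hL₁⟩ := exists_eq_map_add_append hp.1
    (AvoidsWord.pairwise_left (by simpa using havoids) (fun x hx => hlt x (by simp [hx])) hp.1)
  obtain ⟨H₂, L₂, rfl, -, hL₂⟩ := exists_eq_map_add_append hp.2
    (AvoidsWord.pairwise_right (havoids.sublist (by simp)) h0 h0Y hp.2)
  have hpn : p < n := hlt p (by simp)
  obtain ⟨q, rfl⟩ := Nat.exists_eq_add_of_le hpn.le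
  have hq_notMem : q ∉ H₁ ++ H₂ := by
    have hlt_self := hlt (p + q)
    grind
  have hglue := IsGluing.intro H₁ L₁ H₂ L₂ (p := p) (q := q) (by grind) (by grind) hq_notMem
  exact ⟨p, q, _, _, rfl, by simpa using hglue⟩

/-! ### Inserting a new minimum -/

/-- Raises all entries of `w` by one and inserts a new minimum `0` at position `j`. -/
def insertMin (j : ℕ) (w : List ℕ) : List ℕ :=
  (w.take j).map Nat.succ ++ 0 :: (w.drop j).map Nat.succ

theorem zero_notMem_map_succ (w : List ℕ) : 0 ∉ w.map Nat.succ := by simp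

theorem insertMin_inj {j j' : ℕ} {w w' : List ℕ} (hj : j ≤ w.length) (hj' : j' ≤ w'.length) :
    insertMin j w = insertMin j' w' ↔ w = w' ∧ j = j' := by
  refine ⟨fun h => ?_, fun ⟨hw, hj⟩ => by rw [hw, hj]⟩
  have hsucc : Function.Injective (map Nat.succ) := map_injective_iff.2 Nat.succ_injective
  obtain ⟨htake, -, hdrop⟩ :=
    (append_cons_inj_of_notMem (zero_notMem_map_succ _) (zero_notMem_map_succ _)).1 h
  constructor
  · rw [← w.take_append_drop j, ← w'.take_append_drop j', hsucc htake, hsucc hdrop]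
  · simpa [hj, hj'] using congrArg length htake

theorem insertMin_perm_range_iff {j n : ℕ} {w : List ℕ} :
    insertMin j w ~ range (n + 1 + 1) ↔ w ~ range (n + 1) := by
  rw [insertMin, range_succ_eq_map, perm_middle.congr_left, perm_cons, ← map_append,
    take_append_drop, map_perm_map_iff Nat.succ_injective]

theorem idxOf_zero_insertMin {j : ℕ} {w : List ℕ} (hj : j ≤ w.length) :
    (insertMin j w).idxOf 0 = j := by
  rw [insertMin, idxOf_append_cons_self (zero_notMem_map_succ _), length_map, length_take_of_le hj]

theorem idxOf_succ_insertMin {j : ℕ} {w : List ℕ} (hj : j ≤ w.length) (x : ℕ) :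
    (insertMin j w).idxOf (x + 1) = if w.idxOf x < j then w.idxOf x else w.idxOf x + 1 := by
  have hlength := length_take_of_le hj
  have hsplit : w.idxOf x = (w.take j ++ w.drop j).idxOf x := by rw [take_append_drop]
  have hmap (v : List ℕ) : (v.map Nat.succ).idxOf (x + 1) = v.idxOf x :=
    idxOf_map_of_injective Nat.succ_injective x v
  rw [insertMin, hsplit]
  by_cases hx : x ∈ w.take j
  · have hx_succ : x + 1 ∈ (w.take j).map Nat.succ := mem_map_of_mem hx
    have hlt := idxOf_lt_length_iff.2 hx
    rw [idxOf_append_of_mem hx_succ, idxOf_append_of_mem hx, hmap, if_pos (by omega)]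
  · have hx_succ : x + 1 ∉ (w.take j).map Nat.succ :=
      mt (mem_map_of_injective Nat.succ_injective).1 hx
    rw [idxOf_append_of_notMem hx_succ, idxOf_append_of_notMem hx,
      idxOf_cons_ne _ x.succ_ne_zero.symm, hmap, length_map, if_neg (by omega)]
    omega

theorem avoidsWord_insertMin_iff {j : ℕ} {w : List ℕ} (hw : w.Nodup) (h0 : 0 ∈ w.take j) :
    AvoidsWord (insertMin j w) ↔ AvoidsWord w := by
  have h0_drop : 0 ∉ w.drop j := disjoint_take_drop hw le_rfl h0
  have hdrop : ∀ y ∈ (w.drop j).map Nat.succ, 1 < y := forall_mem_map.2 fun y hy =>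
    Nat.succ_lt_succ (Nat.pos_of_ne_zero (ne_of_mem_of_not_mem hy h0_drop))
  rw [insertMin, AvoidsWord.insert_min_iff (mem_map_of_mem h0) hdrop (by simp), ← map_append,
    take_append_drop, AvoidsWord.map_iff (strictMono_nat_of_lt_succ fun n => Nat.lt_succ_self _)]

theorem insertMin_mem_words_iff {j n k : ℕ} {w : List ℕ} (hn : w.idxOf n < j)
    (hj : j ≤ w.length) : insertMin j w ∈ words (n + 1) 1 k ↔ w ∈ words n 0 k := by
  rw [mem_words, mem_words_zero, insertMin_perm_range_iff]
  refine and_congr_right fun hperm => ?_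
  have hidx : ((insertMin j w).idxOf (n + 1) = (insertMin j w).idxOf 1 + k ∧
      ∀ b < 1, (insertMin j w).idxOf (n + 1) < (insertMin j w).idxOf b) ↔
        w.idxOf n = w.idxOf 0 + k := by
    simp only [Nat.lt_one_iff, forall_eq, idxOf_zero_insertMin hj,
      idxOf_succ_insertMin hj, if_pos hn]
    split_ifs <;> omega
  rw [hidx]
  refine and_congr_left fun hk => ?_
  have h0 : 0 ∈ w := mem_of_perm_range hperm n.zero_le
  exact avoidsWord_insertMin_iff (hperm.nodup_iff.2 nodup_range)
    ((mem_take_iff_idxOf_lt h0).2 (by omega))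

theorem exists_eq_map_succ {w : List ℕ} (hw : 0 ∉ w) : ∃ v : List ℕ, v.map Nat.succ = w := by
  have hmem : w ∈ Set.range (map Nat.succ) := by
    rw [Set.range_list_map, Nat.range_succ]
    exact fun x hx => Nat.pos_of_ne_zero (ne_of_mem_of_not_mem hx hw)
  exact hmem

theorem exists_eq_insertMin {n k : ℕ} {v : List ℕ} (hv : v ∈ words (n + 1) 1 k) :
    ∃ w j, v = insertMin j w ∧ w.idxOf n < j ∧ j ≤ w.length := by
  obtain ⟨hperm, -, -, hlt⟩ := mem_words.1 hv
  obtain ⟨X, Y, rfl⟩ := append_of_mem (mem_of_perm_range hperm (n + 1).zero_le)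
  have h0 : 0 ∉ X ++ Y := (nodup_middle.1 (hperm.nodup_iff.2 nodup_range)).notMem
  rw [mem_append, not_or] at h0
  obtain ⟨A, rfl⟩ := exists_eq_map_succ h0.1
  obtain ⟨B, rfl⟩ := exists_eq_map_succ h0.2
  have heq : A.map Nat.succ ++ 0 :: B.map Nat.succ = insertMin A.length (A ++ B) := by
    simp [insertMin]
  have hj : A.length ≤ (A ++ B).length := by simp
  have hlt_zero := hlt 0 one_pos
  rw [heq, idxOf_zero_insertMin hj, idxOf_succ_insertMin hj] at hlt_zero
  refine ⟨A ++ B, A.length, heq, ?_, hj⟩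
  split_ifs at hlt_zero <;> omega

theorem card_words_one (n k : ℕ) :
    (words (n + 1) 1 k).card = ∑ w ∈ words n 0 k, (trailing n w + 1) := by
  have hcard : ∀ w ∈ words n 0 k, trailing n w + 1 = (Finset.Ioc (w.idxOf n) w.length).card := by
    intro w hw
    have hn := idxOf_lt_length_iff.2 (mem_of_perm_range (mem_words_zero.1 hw).1 le_rfl)
    rw [Nat.card_Ioc, trailing]
    omega
  rw [Finset.sum_congr rfl hcard, ← Finset.card_sigma]
  refine (Finset.card_bij (fun z _ => insertMin z.2 z.1) ?_ ?_ ?_).symm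
  · rintro ⟨w, j⟩ h
    simp only [Finset.mem_sigma, Finset.mem_Ioc] at h
    exact (insertMin_mem_words_iff h.2.1 h.2.2).2 h.1
  · rintro ⟨w, j⟩ h ⟨w', j'⟩ h' heq
    simp only [Finset.mem_sigma, Finset.mem_Ioc] at h h'
    obtain ⟨rfl, rfl⟩ := (insertMin_inj h.2.2 h'.2.2).1 heq
    rfl
  · intro v hv
    obtain ⟨w, j, rfl, hn, hj⟩ := exists_eq_insertMin hv
    exact ⟨⟨w, j⟩, by simp [hn, hj, (insertMin_mem_words_iff hn hj).1 hv], rfl⟩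

/-! ### One-line notation -/

theorem sublist_finRange_iff {n : ℕ} {v : List (Fin n)} : v <+ finRange n ↔ v.Pairwise (· < ·) := by
  refine ⟨fun h => (pairwise_lt_finRange n).sublist h, fun h => ?_⟩
  exact sublist_of_subperm_of_pairwise (h.nodup.subperm fun x _ => mem_finRange x) h
    (pairwise_lt_finRange n)

/-- The one-line notation of a permutation, with values in `0, …, n - 1`. -/
def word {n : ℕ} (σ : Equiv.Perm (Fin n)) : List ℕ :=
  (finRange n).map fun i => (σ i : ℕ)

theorem word_injective (n : ℕ) : Function.Injective (word : Equiv.Perm (Fin n) → List ℕ) := by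
  intro σ τ h
  ext i
  exact map_inj_left.1 h i (mem_finRange i)

theorem word_perm_range {n : ℕ} (σ : Equiv.Perm (Fin n)) : word σ ~ range n := by
  have h := (Equiv.Perm.map_finRange_perm σ).map Fin.val
  rwa [map_map, map_coe_finRange_eq_range] at h

theorem exists_word_eq {n : ℕ} {w : List ℕ} (hw : w ~ range n) :
    ∃ σ : Equiv.Perm (Fin n), word σ = w := by
  obtain rfl : w.length = n := by simpa using hw.length_eq
  have hlt (i : Fin w.length) : w[i] < w.length := mem_range.1 (hw.subset (getElem_mem _))
  have hinj : Function.Injective fun i : Fin w.length => (⟨w[i], hlt i⟩ : Fin w.length) := by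
    intro i j hij
    exact Fin.ext ((hw.nodup_iff.2 nodup_range).getElem_inj_iff.1 (Fin.mk.inj_iff.1 hij))
  refine ⟨Equiv.ofBijective _ (Finite.injective_iff_bijective.1 hinj), ?_⟩
  rw [word, ← ofFn_eq_map]
  exact ofFn_getElem

theorem avoidsWord_word_iff {n : ℕ} {σ : Equiv.Perm (Fin n)} :
    AvoidsWord (word σ) ↔ Avoids1324 σ := by
  rw [word, AvoidsWord.map_iff_forall]
  constructor
  · rintro h ⟨i, j, k, l, hij, hjk, hkl, hik, hkj, hjl⟩
    exact h (sublist_finRange_iff.2 (by grind)) hik hkj hjl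
  · intro h i k j l hs hik hkj hjl
    have hlt := sublist_finRange_iff.1 hs
    exact h ⟨i, j, k, l, by grind, by grind, by grind, hik, hkj, hjl⟩

theorem idxOf_word {n : ℕ} (σ : Equiv.Perm (Fin n)) (v : Fin n) :
    (word σ).idxOf (v : ℕ) = σ.symm v := by
  conv_lhs => rw [← σ.apply_symm_apply v]
  exact (idxOf_map_of_injective (Fin.val_injective.comp σ.injective) _ _).trans (idxOf_finRange _)

theorem le_of_mem_words {n a k : ℕ} {w : List ℕ} (hw : w ∈ words n a k) : a ≤ n := by
  obtain ⟨hperm, -, hk, -⟩ := mem_words.1 hw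
  have hn : w.idxOf n < w.length := idxOf_lt_length_iff.2 (mem_of_perm_range hperm le_rfl)
  exact le_of_perm_range hperm (idxOf_lt_length_iff.1 (by omega))

theorem word_mem_words_iff {n a k : ℕ} {σ : Equiv.Perm (Fin (n + 1))} :
    word σ ∈ words n a k ↔ σ ∈ SPerm (n + 1) (a + 1) k := by
  by_cases ha : a < n + 1
  · have hidx (b : ℕ) (hb : b < n + 1) : (word σ).idxOf b = σ.symm ⟨b, hb⟩ := idxOf_word σ ⟨b, hb⟩
    have hbelow : (∀ b < a, (word σ).idxOf n < (word σ).idxOf b) ↔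
        ∀ b : Fin (n + 1), (b : ℕ) + 1 < a + 1 → σ.symm ⟨n, n.lt_succ_self⟩ < σ.symm b := by
      simp only [Fin.forall_iff, Nat.add_lt_add_iff_right, Fin.lt_def]
      refine forall_congr' fun b => ⟨fun h hb hba => ?_, fun h hba => ?_⟩
      · simpa only [hidx _ n.lt_succ_self, hidx b hb] using h hba
      · have hb := hba.trans ha
        simpa only [hidx _ n.lt_succ_self, hidx b hb] using h hb hba
    rw [mem_words, hbelow, hidx a ha, hidx n n.lt_succ_self, avoidsWord_word_iff]
    simp [SPerm, ha, word_perm_range]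
  · refine iff_of_false (fun h => ha (Nat.lt_succ_of_le (le_of_mem_words h))) ?_
    rintro ⟨-, -, ha', -⟩
    exact ha ha'

theorem ncard_sPerm (n a k : ℕ) : (SPerm (n + 1) (a + 1) k).ncard = (words n a k).card := by
  have himage : word '' SPerm (n + 1) (a + 1) k = words n a k := by
    ext w
    constructor
    · rintro ⟨σ, hσ, rfl⟩
      exact word_mem_words_iff.2 hσ
    · intro hw
      obtain ⟨σ, rfl⟩ := exists_word_eq (mem_words.1 hw).1
      exact ⟨σ, word_mem_words_iff.1 hw, rfl⟩
  rw [← Set.ncard_image_of_injective _ (word_injective _), himage, Set.ncard_coe_finset]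

/-! ### Generating functions -/

open Finset.HasAntidiagonal (antidiagonal mem_antidiagonal)

theorem sum_words_succ {A : Type*} [AddCommMonoid A] (φ : ℕ → A) (n k : ℕ) :
    ∑ w ∈ words n 0 (k + 1), φ (trailing n w) =
      ∑ pq ∈ antidiagonal n, ∑ z ∈ words pq.1 0 k ×ˢ words pq.2 0 1,
        φ (trailing pq.1 z.1 + trailing pq.2 z.2) := by
  choose! p q M U hn hglue using fun w => @exists_isGluing_of_mem_words n k w
  rw [Finset.sum_sigma']
  refine Finset.sum_bij (fun w _ => ⟨(p w, q w), (M w, U w)⟩) ?_ ?_ ?_ ?_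
  · intro w hw
    have hMU := (hglue w hw).mem_words_iff.1 ((hn w hw).symm ▸ hw)
    simpa [hn w hw] using hMU
  · intro w hw w' hw' h
    obtain ⟨⟨hp, hq⟩, hM, hU⟩ : (p w = p w' ∧ q w = q w') ∧ M w = M w' ∧ U w = U w' := by
      simpa using h
    exact (hglue w hw).right_unique (hp ▸ hq ▸ hM ▸ hU ▸ hglue w' hw')
  · rintro ⟨⟨p', q'⟩, M', U'⟩ h
    simp only [Finset.mem_sigma, mem_antidiagonal, Finset.mem_product] at h
    obtain ⟨rfl, hM', hU'⟩ := h
    obtain ⟨w, hw⟩ := exists_isGluing hM' hU'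
    have hw_mem := hw.mem_words_iff.2 ⟨hM', hU'⟩
    obtain ⟨⟨hp, hq⟩, hM, hU⟩ := (hglue w hw_mem).left_unique hw (hn w hw_mem)
    exact ⟨w, hw_mem, by simp [hp, hq, hM, hU]⟩
  · intro w hw
    rw [← (hglue w hw).trailing_eq, hn w hw]

open PowerSeries

/-- The generating function of the words in `words n 0 k`, weighted by `x ^ n`. -/
noncomputable def cardSeries (k : ℕ) : ℚ⟦X⟧ :=
  mk fun n => ((words n 0 k).card : ℚ)

/-- The generating function of the entries to the right of the maximum `n` in the words in
`words n 0 k`, weighted by `x ^ n`. -/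
noncomputable def trailingSeries (k : ℕ) : ℚ⟦X⟧ :=
  mk fun n => ∑ w ∈ words n 0 k, (trailing n w : ℚ)

theorem cardSeries_succ (k : ℕ) : cardSeries (k + 1) = cardSeries k * cardSeries 1 := by
  ext n
  simp only [cardSeries, coeff_mk, coeff_mul]
  simpa using sum_words_succ (fun _ => (1 : ℚ)) n k

theorem trailingSeries_succ (k : ℕ) :
    trailingSeries (k + 1) =
      trailingSeries k * cardSeries 1 + cardSeries k * trailingSeries 1 := by
  ext n
  simp only [trailingSeries, cardSeries, coeff_mk, map_add, coeff_mul, ← Finset.sum_add_distrib]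
  rw [sum_words_succ (fun t => (t : ℚ))]
  refine Finset.sum_congr rfl fun pq _ => ?_
  simp [Finset.sum_product, Finset.sum_add_distrib, Finset.mul_sum, mul_comm]

theorem cardSeries_succ_eq_pow (k : ℕ) : cardSeries (k + 1) = cardSeries 1 ^ (k + 1) := by
  induction k with
  | zero => rw [pow_one]
  | succ k ih => rw [cardSeries_succ, ih, ← pow_succ]

theorem trailingSeries_succ_eq (k : ℕ) :
    trailingSeries (k + 1) = (k + 1) * cardSeries 1 ^ k * trailingSeries 1 := by
  induction k with
  | zero => simp
  | succ k ih =>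
    rw [trailingSeries_succ, ih, cardSeries_succ_eq_pow k]
    push_cast
    ring

theorem mk_ncard_sPerm_one :
    (mk fun n => if n = 0 then 0 else ((SPerm (n + 1) 1 1).ncard : ℚ)) = cardSeries 1 := by
  ext n
  rw [cardSeries, coeff_mk, coeff_mk, ncard_sPerm n 0 1]
  split_ifs with hn
  · subst hn
    have hempty : words 0 0 1 = ∅ :=
      Finset.eq_empty_of_forall_notMem fun w hw => by simpa using (mem_words_zero.1 hw).2.2
    simp [hempty]
  · rfl

theorem mk_ncard_sPerm_two (k : ℕ) :
    (mk fun n => if n = 0 then 0 else ((SPerm n 2 k).ncard : ℚ)) =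
      (cardSeries k + trailingSeries k) * X ^ 2 := by
  ext n
  rw [coeff_mk, coeff_mul_X_pow']
  match n with
  | 0 => simp
  | 1 =>
    have hempty : words 0 1 k = ∅ :=
      Finset.eq_empty_of_forall_notMem fun w hw => absurd (le_of_mem_words hw) (by decide)
    simp [ncard_sPerm 0 1 k, hempty]
  | n + 2 =>
    simp [ncard_sPerm (n + 1) 1 k, card_words_one, cardSeries, trailingSeries,
      Finset.sum_add_distrib, add_comm]

end Words1324

/-- in `ℚ⟦x⟧`, with `f = Σ_{n≥1} a_{n+1,1} xⁿ`, `T_{2,0} = x²`, and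
`T_{2,j} = Σ_{n≥1} b_{n,j} xⁿ` for `j ≥ 1`, for every `k ≥ 2` we have
`T_{2,k} = f^k T_{2,0} + k f^{k-1} (T_{2,1} - f T_{2,0})`. -/
theorem stmt_11 (k : ℕ) (hk : 2 ≤ k) :
    (PowerSeries.mk fun n => if n = 0 then 0 else ((SPerm n 2 k).ncard : ℚ)) =
      (PowerSeries.mk fun n => if n = 0 then 0 else ((SPerm (n + 1) 1 1).ncard : ℚ)) ^ k *
        PowerSeries.X ^ 2 +
      (k : PowerSeries ℚ) *
        (PowerSeries.mk fun n => if n = 0 then 0 else ((SPerm (n + 1) 1 1).ncard : ℚ)) ^ (k - 1) *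
        ((PowerSeries.mk fun n => if n = 0 then 0 else ((SPerm n 2 1).ncard : ℚ)) -
          (PowerSeries.mk fun n => if n = 0 then 0 else ((SPerm (n + 1) 1 1).ncard : ℚ)) *
            PowerSeries.X ^ 2) := by
  obtain ⟨j, rfl⟩ : ∃ j, k = j + 1 := Nat.exists_eq_succ_of_ne_zero (by omega)
  open Words1324 in
  rw [mk_ncard_sPerm_one, mk_ncard_sPerm_two, mk_ncard_sPerm_two, cardSeries_succ_eq_pow,
    trailingSeries_succ_eq, Nat.add_sub_cancel]
  push_cast
  ring
end

section
/- Let n ≥ 3 and k ≥ 1, and let a_{n,k} = |S_{n,k}^{1≺n}(1324)|. The number of permutations σ ∈ S_{n,k}^{2≺n}(1324) whose last entry is 1 (i.e., σ(n) = 1) equals a_{n−1,k}. Explicitly, the map sending σ ∈ S_{n−1,k}^{1≺n−1}(1324) to the permutation of {1,…,n} whose one-line notation is obtained from σ by increasing every entry by 1 and appending the entry 1 at the end is a bijection onto this set. -/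
/-- One-line notation of a permutation, as a list of 1-based values. -/
def word {n : ℕ} (σ : Equiv.Perm (Fin n)) : List ℕ :=
  List.ofFn fun i => (σ i : ℕ) + 1

/-- The permutation `(σ(1)+1) ⋯ (σ(m)+1) 1` in one-line notation. Reading positions through
`finSuccEquivLast` and values through `finSuccEquiv`, the new position (the last one) and the
new value (the smallest one) both become `none`, so it is the `Option`-extension of `σ`. -/
def appendOne {m : ℕ} (σ : Equiv.Perm (Fin m)) : Equiv.Perm (Fin (m + 1)) :=
  (finSuccEquivLast.trans σ.optionCongr).trans (finSuccEquiv m).symm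

section AppendOne

variable {m : ℕ} (σ : Equiv.Perm (Fin m))

@[simp]
theorem appendOne_castSucc (i : Fin m) : appendOne σ i.castSucc = (σ i).succ := by
  simp [appendOne]

@[simp]
theorem appendOne_last : appendOne σ (Fin.last m) = 0 := by
  simp [appendOne]

@[simp]
theorem appendOne_symm_succ (i : Fin m) : (appendOne σ).symm i.succ = (σ.symm i).castSucc := by
  simp [Equiv.symm_apply_eq]

@[simp]
theorem appendOne_symm_zero : (appendOne σ).symm 0 = Fin.last m := by
  simp [Equiv.symm_apply_eq]

theorem word_appendOne : word (appendOne σ) = (word σ).map (· + 1) ++ [1] := by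
  simp only [word, List.ofFn_succ', List.concat_eq_append, List.map_ofFn, appendOne_castSucc,
    appendOne_last, Fin.val_succ, Fin.val_zero, zero_add, Function.comp_def]

theorem appendOne_injective : Function.Injective (appendOne (m := m)) := fun σ τ h ↦
  Equiv.ext fun i ↦ by simpa using Equiv.congr_fun h i.castSucc

theorem range_appendOne :
    Set.range (appendOne (m := m)) = {τ | τ (Fin.last m) = 0} := by
  refine Set.Subset.antisymm (Set.range_subset_iff.2 appendOne_last) fun τ hτ ↦ ?_
  have hτ : τ (Fin.last m) = 0 := hτ
  have map_castSucc_ne_zero (i : Fin m) : τ i.castSucc ≠ 0 :=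
    hτ ▸ τ.injective.ne i.castSucc_ne_last
  have pred_injective :
      Function.Injective fun i : Fin m ↦ (τ i.castSucc).pred (map_castSucc_ne_zero i) :=
    fun i j hij ↦ by simpa using hij
  refine ⟨Equiv.ofBijective _ (Finite.injective_iff_bijective.1 pred_injective), ?_⟩
  ext1 i
  obtain ⟨i, rfl⟩ | rfl := i.eq_castSucc_or_eq_last
  · simp
  · simp [hτ]

variable {σ}

theorem avoids1324_appendOne_iff : Avoids1324 (appendOne σ) ↔ Avoids1324 σ := by
  refine not_congr ⟨?_, ?_⟩
  · rintro ⟨i, j, k, l, hij, hjk, hkl, hik, hkj, hjl⟩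
    -- The last entry is the smallest, so it cannot play the role of the 4.
    have hl : l ≠ Fin.last m := by
      rintro rfl
      simp at hjl
    have hk : k ≠ Fin.last m := Fin.ne_last_of_lt hkl
    have hj : j ≠ Fin.last m := Fin.ne_last_of_lt hjk
    have hi : i ≠ Fin.last m := Fin.ne_last_of_lt hij
    obtain ⟨i, rfl⟩ := Fin.exists_castSucc_eq.2 hi
    obtain ⟨j, rfl⟩ := Fin.exists_castSucc_eq.2 hj
    obtain ⟨k, rfl⟩ := Fin.exists_castSucc_eq.2 hk
    obtain ⟨l, rfl⟩ := Fin.exists_castSucc_eq.2 hl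
    simp only [appendOne_castSucc, Fin.succ_lt_succ_iff, Fin.castSucc_lt_castSucc_iff]
      at hij hjk hkl hik hkj hjl
    exact ⟨i, j, k, l, hij, hjk, hkl, hik, hkj, hjl⟩
  · rintro ⟨i, j, k, l, h⟩
    exact ⟨i.castSucc, j.castSucc, k.castSucc, l.castSucc, by simpa using h⟩

theorem forall_lt_castSucc_lt_appendOne_symm_iff {a : ℕ} {i : Fin m} :
    (∀ b : Fin (m + 1), (b : ℕ) < a + 1 → i.castSucc < (appendOne σ).symm b) ↔
      ∀ b : Fin m, (b : ℕ) < a → i < σ.symm b := by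
  -- The value `b = 0` imposes nothing, since the appended entry stands at the very end.
  simp [Fin.forall_fin_succ (n := m)]

theorem appendOne_mem_sPerm_iff {a k : ℕ} (ha : 1 ≤ a) :
    appendOne σ ∈ SPerm (m + 1) (a + 1) k ↔ σ ∈ SPerm m a k := by
  obtain ⟨a, rfl⟩ := Nat.exists_eq_add_of_le' ha
  rcases m with _ | m
  · simp [SPerm]
  have max_eq_succ (h : m + 1 < m + 2) :
      (⟨m + 1, h⟩ : Fin (m + 2)) = Fin.succ ⟨m, m.lt_succ_self⟩ := rfl
  have left_eq_succ (h : a + 1 < m + 2) :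
      (⟨a + 1, h⟩ : Fin (m + 2)) = Fin.succ ⟨a, Nat.lt_of_succ_lt_succ h⟩ := rfl
  simp only [SPerm, Set.mem_ofPred_eq, avoids1324_appendOne_iff, Nat.add_sub_cancel,
    max_eq_succ, left_eq_succ, appendOne_symm_succ, Fin.val_castSucc, Nat.add_lt_add_iff_right,
    forall_lt_castSucc_lt_appendOne_symm_iff, Nat.lt_add_one, exists_true_left]

theorem bijOn_appendOne {a k : ℕ} (ha : 1 ≤ a) :
    Set.BijOn appendOne (SPerm m a k)
      {τ | τ ∈ SPerm (m + 1) (a + 1) k ∧ τ (Fin.last m) = 0} := by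
  refine ⟨fun σ hσ ↦ ⟨(appendOne_mem_sPerm_iff ha).2 hσ, appendOne_last σ⟩,
    appendOne_injective.injOn, ?_⟩
  rintro τ ⟨hτ, hlast⟩
  obtain ⟨σ, rfl⟩ := range_appendOne.ge hlast
  exact ⟨σ, (appendOne_mem_sPerm_iff ha).1 hτ, rfl⟩

end AppendOne

theorem stmt_12_general (m a k : ℕ) (ha : 1 ≤ a) :
    {τ : Equiv.Perm (Fin (m + 1)) | τ ∈ SPerm (m + 1) (a + 1) k ∧
        τ (Fin.last m) = 0}.ncard = (SPerm m a k).ncard ∧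
    ∃ F : Equiv.Perm (Fin m) → Equiv.Perm (Fin (m + 1)),
      (∀ σ, word (F σ) = (word σ).map (· + 1) ++ [1]) ∧
      Set.BijOn F (SPerm m a k)
        {τ : Equiv.Perm (Fin (m + 1)) | τ ∈ SPerm (m + 1) (a + 1) k ∧
          τ (Fin.last m) = 0} :=
  ⟨(bijOn_appendOne ha).ncard_eq.symm, appendOne, word_appendOne, bijOn_appendOne ha⟩

/-- for `n ≥ 3` and `k ≥ 1`, the permutations in `S_{n,k}^{2≺n}(1324)`
ending with the entry `1` are counted by `a_{n-1,k}`; explicitly, the map sending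
`σ ∈ S_{n-1,k}^{1≺n-1}(1324)` to the permutation whose one-line notation is that of
`σ` with every entry increased by 1 followed by a final entry `1`, is a bijection
onto that set. -/
theorem stmt_12 (n k : ℕ) (hn : 3 ≤ n) (hk : 1 ≤ k) :
    {τ : Equiv.Perm (Fin n) | τ ∈ SPerm n 2 k ∧
        τ ⟨n - 1, by omega⟩ = ⟨0, by omega⟩}.ncard = (SPerm (n - 1) 1 k).ncard ∧
    ∃ F : Equiv.Perm (Fin (n - 1)) → Equiv.Perm (Fin n),
      (∀ σ, word (F σ) = (word σ).map (· + 1) ++ [1]) ∧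
      Set.BijOn F (SPerm (n - 1) 1 k)
        {τ : Equiv.Perm (Fin n) | τ ∈ SPerm n 2 k ∧
          τ ⟨n - 1, by omega⟩ = ⟨0, by omega⟩} := by
  obtain ⟨m, rfl⟩ := Nat.exists_eq_add_of_le' (show 1 ≤ n by omega)
  exact stmt_12_general m 1 k le_rfl
end

section
/- Let σ be a permutation of {1,…,n} avoiding 1324, with p = σ⁻¹(1), q = σ⁻¹(n), and p + 1 < q (so there is at least one entry strictly between the 1 and the n). Let m = min{ σ(r) : p < r < q }. Then: (i) there are no indices i < j < p with σ(i) < m < σ(j); and (ii) there are no indices i, j with q < i < j ≤ n and σ(i) < m < σ(j). -/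
/-!
An occurrence of 132 lying before the entry `n` extends to an occurrence of 1324 by appending `n`,
and an occurrence of 213 lying after the entry `1` extends to one by prepending `1`. With an entry
`m` between `1` and `n`, positions `i < j < p` with `σ i < m < σ j` give the pattern 132 as
`σ i, σ j, m`, and positions `q < i < j` give the pattern 213 as `m, σ i, σ j`.
-/

section PatternAvoidance

open Set

variable {α β : Type*} [Preorder α] [Preorder β]

/-- Avoidance of the pattern 1324 by a map between preorders. For a permutation of `Fin n` this
unfolds to `Avoids1324`. -/
def MapAvoids1324 (f : α → β) : Prop :=
  ¬ ∃ i j k l, i < j ∧ j < k ∧ k < l ∧ f i < f k ∧ f k < f j ∧ f j < f l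

/-- Avoidance of the pattern 132 by `f` at the positions in `s`. -/
def Avoids132On (f : α → β) (s : Set α) : Prop :=
  ¬ ∃ i ∈ s, ∃ j ∈ s, ∃ k ∈ s, i < j ∧ j < k ∧ f i < f k ∧ f k < f j

/-- Avoidance of the pattern 213 by `f` at the positions in `s`. -/
def Avoids213On (f : α → β) (s : Set α) : Prop :=
  ¬ ∃ i ∈ s, ∃ j ∈ s, ∃ k ∈ s, i < j ∧ j < k ∧ f j < f i ∧ f i < f k

variable {f : α → β} {p q r : α}

theorem MapAvoids1324.avoids132On_Iio (hf : MapAvoids1324 f) (hq : ∀ x < q, f x < f q) :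
    Avoids132On f (Iio q) := by
  rintro ⟨i, -, j, hjq, k, hkq, hij, hjk, hik, hkj⟩
  exact hf ⟨i, j, k, q, hij, hjk, hkq, hik, hkj, hq j hjq⟩

theorem MapAvoids1324.avoids213On_Ioi (hf : MapAvoids1324 f) (hp : ∀ x > p, f p < f x) :
    Avoids213On f (Ioi p) := by
  rintro ⟨i, hpi, j, hpj, k, -, hij, hjk, hji, hik⟩
  exact hf ⟨p, i, j, k, hpi, hij, hjk, hp j hpj, hji, hik⟩

theorem stmt_17_general (hf : MapAvoids1324 f) (hp : ∀ x > p, f p < f x)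
    (hq : ∀ x < q, f x < f q) (hpr : p < r) (hrq : r < q) :
    (¬ ∃ i j, i < j ∧ j < p ∧ f i < f r ∧ f r < f j) ∧
    (¬ ∃ i j, q < i ∧ i < j ∧ f i < f r ∧ f r < f j) := by
  constructor
  · rintro ⟨i, j, hij, hjp, hir, hrj⟩
    have hjr : j < r := hjp.trans hpr
    have hjq : j < q := hjr.trans hrq
    exact hf.avoids132On_Iio hq ⟨i, hij.trans hjq, j, hjq, r, hrq, hij, hjr, hir, hrj⟩
  · rintro ⟨i, j, hqi, hij, hir, hrj⟩
    have hri : r < i := hrq.trans hqi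
    have hpi : p < i := hpr.trans hri
    exact hf.avoids213On_Ioi hp ⟨r, hpr, i, hpi, j, hpi.trans hij, hri, hij, hir, hrj⟩

end PatternAvoidance

section Extrema

variable {α β : Type*} [PartialOrder β] (e : α ≃ β) {b : β} {x : α}

theorem apply_symm_lt_apply_of_isBot (hb : IsBot b) (hx : x ≠ e.symm b) :
    e (e.symm b) < e x :=
  ((e.apply_symm_apply b).symm ▸ hb (e x)).lt_of_ne (e.injective.ne hx.symm)

theorem apply_lt_apply_symm_of_isTop (hb : IsTop b) (hx : x ≠ e.symm b) :
    e x < e (e.symm b) :=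
  ((e.apply_symm_apply b).symm ▸ hb (e x)).lt_of_ne (e.injective.ne hx)

end Extrema

/-- let `σ` avoid 1324, with `p` the position of the entry `1`, `q` the
position of the entry `n`, and `p + 1 < q`.  Let `m` be the least value occurring
strictly between positions `p` and `q`.  Then (i) no two positions `i < j` before `p`
have `σ i < m < σ j`, and (ii) no two positions `i < j` after `q` have `σ i < m < σ j`. -/
theorem stmt_17 (n : ℕ) (hn : 1 ≤ n) (σ : Equiv.Perm (Fin n))
    (havoid : Avoids1324 σ) (m : Fin n)
    (hpq : ((σ.symm ⟨0, by omega⟩ : Fin n) : ℕ) + 1 < ((σ.symm ⟨n - 1, by omega⟩ : Fin n) : ℕ))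
    (hm : IsLeast {v : Fin n | ∃ r : Fin n,
      σ.symm ⟨0, by omega⟩ < r ∧ r < σ.symm ⟨n - 1, by omega⟩ ∧ σ r = v} m) :
    (¬ ∃ i j : Fin n, i < j ∧ j < σ.symm ⟨0, by omega⟩ ∧ σ i < m ∧ m < σ j) ∧
    (¬ ∃ i j : Fin n, σ.symm ⟨n - 1, by omega⟩ < i ∧ i < j ∧ σ i < m ∧ m < σ j) := by
  obtain ⟨⟨r, hpr, hrq, rfl⟩, -⟩ := hm
  have isBot_zero : IsBot (⟨0, by omega⟩ : Fin n) := fun v => Nat.zero_le v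
  have isTop_last : IsTop (⟨n - 1, by omega⟩ : Fin n) := fun v => Nat.le_sub_one_of_lt v.isLt
  exact stmt_17_general havoid
    (fun _ hx => apply_symm_lt_apply_of_isBot σ isBot_zero hx.ne')
    (fun _ hx => apply_lt_apply_symm_of_isTop σ isTop_last hx.ne) hpr hrq
end
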